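/- arXiv:0804.4611 — 8 statements merged into one kernel-verified Lean document; each statement's English description precedes it below -/
import Mathlib

section
/- Every element M of SL(3,ℤ) of finite order has a nonzero fixed vector in ℤ³, i.e. there exists v ∈ ℤ³, v ≠ 0, with M·v = v. -/
/-!
If `A ^ k = 1`, then averaging the standard form over the powers of `A` gives a positive definite
form `S` with `Aᵀ S A = S`. Hence `Aᵀ S (A - 1) = S - Aᵀ S = -(A - 1)ᵀ S`, and in odd dimension,
when `det A = 1`, taking determinants yields `det S * det (A - 1) = -(det S * det (A - 1))`. As
`det S ≠ 0`, the matrix `A - 1` is singular.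
-/

open Finset Matrix

variable {n R : Type*} [Fintype n] [DecidableEq n]

section CommRing

variable [CommRing R] {A S : Matrix n n R}

theorem exists_mulVec_eq_self_iff [IsDomain R] :
    (∃ v ≠ 0, A *ᵥ v = v) ↔ (A - 1).det = 0 := by
  simp only [← exists_mulVec_eq_zero_iff, sub_mulVec, one_mulVec, sub_eq_zero]

theorem transpose_mul_mul_sub_one (hS : Aᵀ * S * A = S) :
    Aᵀ * S * (A - 1) = -((A - 1)ᵀ * S) := by
  simp only [mul_sub, hS, transpose_sub, transpose_one, sub_mul, mul_one, one_mul, neg_sub]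

theorem det_sub_one_eq_zero_of_transpose_mul_mul_eq [IsDomain R] [NeZero (2 : R)]
    (hn : Odd (Fintype.card n)) (hA : A.det = 1) (hS : Aᵀ * S * A = S) (hS₀ : S.det ≠ 0) :
    (A - 1).det = 0 := by
  have hdet : S.det * (A - 1).det = -(S.det * (A - 1).det) :=
    calc S.det * (A - 1).det = (Aᵀ * S * (A - 1)).det := by
          rw [det_mul, det_mul, det_transpose, hA, one_mul]
      _ = (-((A - 1)ᵀ * S)).det := by rw [transpose_mul_mul_sub_one hS]
      _ = -(S.det * (A - 1).det) := by
          rw [det_neg, hn.neg_one_pow, det_mul, det_transpose, neg_one_mul, mul_comm]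
  have htwo : 2 * (S.det * (A - 1).det) = 0 := by linear_combination hdet
  simpa [hS₀, two_ne_zero] using htwo

theorem det_ne_zero_of_dotProduct_mulVec_ne_zero [IsDomain R]
    (hS : ∀ v ≠ 0, v ⬝ᵥ S *ᵥ v ≠ 0) : S.det ≠ 0 := by
  intro hdet
  obtain ⟨v, hv, hSv⟩ := exists_mulVec_eq_zero_iff.mpr hdet
  exact hS v hv (by rw [hSv, dotProduct_zero])

/-- The sum over `i < k` of the Gram matrices of `A ^ i`. When `A ^ k = 1` it is, up to a scalar,
the average of the standard bilinear form over the cyclic group generated by `A`. -/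
def powGramSum (A : Matrix n n R) (k : ℕ) : Matrix n n R :=
  ∑ i ∈ range k, (A ^ i)ᵀ * A ^ i

theorem transpose_mul_powGramSum_mul {k : ℕ} (hA : A ^ k = 1) :
    Aᵀ * powGramSum A k * A = powGramSum A k := by
  have hshift : Aᵀ * powGramSum A k * A = ∑ i ∈ range k, (A ^ (i + 1))ᵀ * A ^ (i + 1) := by
    simp only [powGramSum, mul_sum, sum_mul, pow_succ, transpose_mul, Matrix.mul_assoc]
  rw [hshift, powGramSum, ← sub_eq_zero, ← sum_sub_distrib,
    sum_range_sub fun i ↦ (A ^ i)ᵀ * A ^ i, hA, pow_zero, sub_self]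

theorem dotProduct_powGramSum_mulVec (A : Matrix n n R) (k : ℕ) (v : n → R) :
    v ⬝ᵥ powGramSum A k *ᵥ v = ∑ i ∈ range k, (A ^ i *ᵥ v) ⬝ᵥ (A ^ i *ᵥ v) := by
  simp only [powGramSum, sum_mulVec, dotProduct_sum, ← mulVec_mulVec, dotProduct_mulVec v,
    vecMul_transpose]

end CommRing

section LinearOrderedRing

variable [CommRing R] [LinearOrder R] [IsStrictOrderedRing R]

theorem dotProduct_powGramSum_mulVec_pos (A : Matrix n n R) {k : ℕ} (hk : 0 < k) {v : n → R}
    (hv : v ≠ 0) : 0 < v ⬝ᵥ powGramSum A k *ᵥ v := by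
  have hnonneg (w : n → R) : 0 ≤ w ⬝ᵥ w := sum_nonneg fun j _ ↦ mul_self_nonneg (w j)
  have hpos : 0 < v ⬝ᵥ v := (hnonneg v).lt_of_ne' (dotProduct_self_eq_zero.not.mpr hv)
  rw [dotProduct_powGramSum_mulVec]
  exact sum_pos' (fun i _ ↦ hnonneg _)
    ⟨0, mem_range.mpr hk, by rwa [pow_zero, one_mulVec]⟩

theorem det_powGramSum_ne_zero (A : Matrix n n R) {k : ℕ} (hk : 0 < k) :
    (powGramSum A k).det ≠ 0 :=
  det_ne_zero_of_dotProduct_mulVec_ne_zero fun _ hv ↦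
    (dotProduct_powGramSum_mulVec_pos A hk hv).ne'

theorem stmt1_general (hn : Odd (Fintype.card n)) (M : Matrix.SpecialLinearGroup n R)
    (hM : IsOfFinOrder M) : ∃ v ≠ 0, (M : Matrix n n R) *ᵥ v = v := by
  obtain ⟨k, hk, hMk⟩ := isOfFinOrder_iff_pow_eq_one.mp hM
  have hpow : (M : Matrix n n R) ^ k = 1 := by
    rw [← Matrix.SpecialLinearGroup.coe_pow, hMk, Matrix.SpecialLinearGroup.coe_one]
  exact exists_mulVec_eq_self_iff.mpr <|
    det_sub_one_eq_zero_of_transpose_mul_mul_eq hn M.det_coe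
      (transpose_mul_powGramSum_mul hpow) (det_powGramSum_ne_zero _ hk)

end LinearOrderedRing

/-- Every element `M` of `SL(3,ℤ)` of finite order has a nonzero fixed vector in `ℤ³`. -/
theorem stmt1 (M : Matrix.SpecialLinearGroup (Fin 3) ℤ) (hfin : IsOfFinOrder M) :
    ∃ v : Fin 3 → ℤ, v ≠ 0 ∧ (M : Matrix (Fin 3) (Fin 3) ℤ).mulVec v = v :=
  stmt1_general (by decide) M hfin
end

section
/- Every nontrivial finite subgroup of SL(3,ℤ) is isomorphic to one of the following groups: the cyclic groups ℤ/2, ℤ/3, ℤ/4, ℤ/6; the dihedral groups D₄, D₆, D₈, D₁₂ of orders 4, 6, 8, 12 respectively; the alternating group A₄; or the symmetric group S₄. -/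
/-!
Over `ℂ`, the eigenvalues of a finite-order `g ∈ SL(3, ℤ)` are roots of unity `a, b, c` with
`abc = 1` and integral sum `t`, so `ab + bc + ca` is the conjugate of `t`, that is `t` itself. Hence
`1` is an eigenvalue, `t ∈ {-1, 0, 1, 2, 3}`, and `t` determines the order of `g`, which is
`2, 3, 4, 6` or `1` respectively.

The sums of the traces and of their squares over a finite subgroup `G` are multiples of `|G|`, being
`|G|` times the dimension of the invariants in `ℚ³` and in `ℚ³ ⊗ ℚ³`. Applied to Sylow subgroups
this gives `|G| ∣ 24`, and applied to `G` it restricts the number of elements of each order. Two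
further facts about dimension three exclude most of the remaining groups: an element of order three
does not commute with a group of order four, and if `s` has order four and inverts `r`, then
`r² = 1`, which rules out quaternion and dicyclic groups. Finally, the tetrahedral and octahedral
groups are recognised by their action on the four Sylow `3`-subgroups.
-/

open Polynomial

section UnitComplexNumbers

variable {a b c : ℂ}

lemma mul_add_mul_add_mul_eq_conj_add (ha : ‖a‖ = 1) (hb : ‖b‖ = 1) (hc : ‖c‖ = 1)
    (hprod : a * b * c = 1) : a * b + b * c + c * a = starRingEnd ℂ (a + b + c) := by
  have conj_mul_self : ∀ z : ℂ, ‖z‖ = 1 → starRingEnd ℂ z * z = 1 := fun z hz ↦ by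
    rw [Complex.conj_mul', hz]; norm_num
  rw [map_add, map_add]
  linear_combination (starRingEnd ℂ a + starRingEnd ℂ b + starRingEnd ℂ c) * hprod -
    b * c * conj_mul_self a ha - c * a * conj_mul_self b hb - a * b * conj_mul_self c hc

lemma mem_Icc_of_one_add_add_eq_intCast {t : ℤ} (ha : ‖a‖ = 1) (hb : ‖b‖ = 1)
    (hsum : 1 + a + b = t) : t ∈ Set.Icc (-1 : ℤ) 3 := by
  have hab : ((t - 1 : ℤ) : ℂ) = a + b := by push_cast; linear_combination -hsum
  have hnorm : ‖((t - 1 : ℤ) : ℂ)‖ ≤ 2 := by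
    rw [hab]; linarith [norm_add_le a b]
  rw [Complex.norm_intCast] at hnorm
  have habs : |t - 1| ≤ 2 := by exact_mod_cast hnorm
  rw [abs_le] at habs
  constructor <;> linarith [habs.1, habs.2]

lemma mem_Icc_of_add_add_eq_intCast {t : ℤ} (ha : ‖a‖ = 1) (hb : ‖b‖ = 1) (hc : ‖c‖ = 1)
    (hprod : a * b * c = 1) (hsum : a + b + c = t) : t ∈ Set.Icc (-1 : ℤ) 3 := by
  have hpairs := mul_add_mul_add_mul_eq_conj_add ha hb hc hprod
  rw [hsum, map_intCast] at hpairs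
  have hroot : (a - 1) * (b - 1) * (c - 1) = 0 := by
    linear_combination hprod - hpairs + hsum
  rcases mul_eq_zero.1 hroot with hab | hc'
  · rcases mul_eq_zero.1 hab with ha' | hb'
    · exact mem_Icc_of_one_add_add_eq_intCast hb hc (by linear_combination hsum - ha')
    · exact mem_Icc_of_one_add_add_eq_intCast ha hc (by linear_combination hsum - hb')
  · exact mem_Icc_of_one_add_add_eq_intCast ha hb (by linear_combination hsum - hc')

end UnitComplexNumbers

section FiniteOrderEndomorphisms

lemma eq_one_of_pow_eq_one_of_isNilpotent_sub_one {K V : Type*} [Field K] [CharZero K]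
    [AddCommGroup V] [Module K V] [FiniteDimensional K V] {f : Module.End K V} {n : ℕ}
    (hn : n ≠ 0) (hf : f ^ n = 1) (hnil : IsNilpotent (f - 1)) : f = 1 := by
  have hsep : (X ^ n - 1 : K[X]).Separable :=
    X_pow_sub_one_separable_iff.2 (Nat.cast_ne_zero.2 hn)
  have hf_ss : f.IsSemisimple :=
    Module.End.isSemisimple_of_squarefree_aeval_eq_zero hsep.squarefree (by simp [hf])
  have hsub_ss : (f - 1).IsSemisimple :=
    hf_ss.sub_of_commute (Commute.one_right f) Module.End.isSemisimple_id
  exact sub_eq_zero.1 (Module.End.eq_zero_of_isNilpotent_isSemisimple hnil hsub_ss)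

lemma pow_eq_one_of_mem_roots_charpoly {K V : Type*} [Field K] [AddCommGroup V] [Module K V]
    [FiniteDimensional K V] {f : Module.End K V} {n : ℕ} (hf : f ^ n = 1) {μ : K}
    (hμ : μ ∈ (LinearMap.charpoly f).roots) : μ ^ n = 1 := by
  have heig : f.HasEigenvalue μ :=
    (Module.End.hasEigenvalue_iff_isRoot_charpoly f μ).2 (isRoot_of_mem_roots hμ)
  obtain ⟨v, hv⟩ := heig.exists_hasEigenvector
  have hpow : μ ^ n • v = (1 : K) • v := by rw [← hv.pow_apply, hf, one_smul, Module.End.one_apply]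
  exact smul_left_injective K hv.2 hpow

variable {V : Type*} [AddCommGroup V] [Module ℚ V] [FiniteDimensional ℚ V]
  {f : Module.End ℚ V} {n : ℕ}

lemma exists_intCast_eq_trace_of_pow_eq_one (hn : n ≠ 0) (hf : f ^ n = 1) :
    ∃ t : ℤ, LinearMap.trace ℚ V f = t := by
  have hfC : (f.baseChange ℂ : Module.End ℂ (TensorProduct ℚ ℂ V)) ^ n = 1 := by
    rw [← LinearMap.baseChange_pow, hf]; exact LinearMap.baseChange_one ..
  have hint : IsIntegral ℤ (algebraMap ℚ ℂ (LinearMap.trace ℚ V f)) := by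
    rw [← LinearMap.trace_baseChange,
      Module.End.trace_eq_sum_roots_charpoly_of_splits (IsAlgClosed.splits _)]
    refine IsIntegral.multiset_sum fun μ hμ ↦ IsIntegral.of_pow hn.bot_lt ?_
    rw [pow_eq_one_of_mem_roots_charpoly hfC hμ]
    exact isIntegral_one
  obtain ⟨t, ht⟩ := IsIntegrallyClosed.isIntegral_iff.1
    ((isIntegral_algebraMap_iff (algebraMap ℚ ℂ).injective).1 hint)
  exact ⟨t, by simpa using ht.symm⟩

lemma exists_roots_charpoly_baseChange (hV : Module.finrank ℚ V = 3) (hn : n ≠ 0)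
    (hf : f ^ n = 1) : ∃ a b c : ℂ, ‖a‖ = 1 ∧ ‖b‖ = 1 ∧ ‖c‖ = 1 ∧
      a * b * c = algebraMap ℚ ℂ (LinearMap.det f) ∧
      a + b + c = algebraMap ℚ ℂ (LinearMap.trace ℚ V f) ∧
      (LinearMap.charpoly f).map (algebraMap ℚ ℂ) = (X - C a) * (X - C b) * (X - C c) := by
  set F : Module.End ℂ (TensorProduct ℚ ℂ V) := f.baseChange ℂ
  have hF : F ^ n = 1 := by
    rw [← LinearMap.baseChange_pow, hf]; exact LinearMap.baseChange_one ..
  have hsplits : (LinearMap.charpoly F).Splits := IsAlgClosed.splits _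
  have hcard : (LinearMap.charpoly F).roots.card = 3 := by
    rw [← hsplits.natDegree_eq_card_roots, LinearMap.charpoly_natDegree,
      Module.finrank_baseChange, hV]
  obtain ⟨a, b, c, hroots⟩ := Multiset.card_eq_three.1 hcard
  have hnorm : ∀ μ ∈ (LinearMap.charpoly F).roots, ‖μ‖ = 1 := fun μ hμ ↦
    Complex.norm_eq_one_of_pow_eq_one (pow_eq_one_of_mem_roots_charpoly hF hμ) hn
  refine ⟨a, b, c, hnorm a (by simp [hroots]), hnorm b (by simp [hroots]),
    hnorm c (by simp [hroots]), ?_, ?_, ?_⟩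
  · rw [← LinearMap.det_baseChange, Module.End.det_eq_prod_roots_charpoly_of_splits hsplits, hroots]
    simp [mul_assoc]
  · rw [← LinearMap.trace_baseChange, Module.End.trace_eq_sum_roots_charpoly_of_splits hsplits,
      hroots]
    simp [add_assoc]
  · rw [← LinearMap.charpoly_baseChange,
      hsplits.eq_prod_roots_of_monic (LinearMap.charpoly_monic F), hroots]
    simp [mul_assoc]

lemma exists_trace_charpoly_of_pow_eq_one (hV : Module.finrank ℚ V = 3)
    (hdet : LinearMap.det f = 1) (hn : n ≠ 0) (hf : f ^ n = 1) :
    ∃ t ∈ Set.Icc (-1 : ℤ) 3, LinearMap.trace ℚ V f = t ∧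
      LinearMap.charpoly f = X ^ 3 - C (t : ℚ) * X ^ 2 + C (t : ℚ) * X - 1 := by
  obtain ⟨t, ht⟩ := exists_intCast_eq_trace_of_pow_eq_one hn hf
  obtain ⟨a, b, c, ha, hb, hc, hprod, hsum, hchar⟩ := exists_roots_charpoly_baseChange hV hn hf
  rw [hdet, map_one] at hprod
  rw [ht, map_intCast] at hsum
  have hpairs := mul_add_mul_add_mul_eq_conj_add ha hb hc hprod
  rw [hsum, map_intCast] at hpairs
  refine ⟨t, mem_Icc_of_add_add_eq_intCast ha hb hc hprod hsum, ht,
    map_injective _ (algebraMap ℚ ℂ).injective ?_⟩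
  have hsumC : C a + C b + C c = (t : ℂ[X]) := by rw [← C_add, ← C_add, hsum, map_intCast]
  have hpairsC : C a * C b + C b * C c + C c * C a = (t : ℂ[X]) := by
    rw [← C_mul, ← C_mul, ← C_mul, ← C_add, ← C_add, hpairs, map_intCast]
  have hprodC : C a * C b * C c = (1 : ℂ[X]) := by rw [← C_mul, ← C_mul, hprod, C_1]
  rw [hchar]
  simp only [Polynomial.map_sub, Polynomial.map_add, Polynomial.map_mul, Polynomial.map_pow,
    map_X, Polynomial.map_one, map_intCast, Polynomial.map_intCast]
  linear_combination -X ^ 2 * hsumC + X * hpairsC - hprodC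

end FiniteOrderEndomorphisms

section OrderAndTrace

variable {A : Type*} [Ring A] [Module ℚ A] {a : A}

lemma orderOf_eq_four_of_cubic_eq_zero (hne : a ≠ 1) (hcubic : a ^ 3 - a ^ 2 + a - 1 = 0) :
    orderOf a = 4 := by
  have hfour : a ^ 4 = 1 := by
    have hfactor : a ^ 4 - 1 = (a ^ 3 - a ^ 2 + a - 1) * (a + 1) := by noncomm_ring
    exact sub_eq_zero.1 (by rw [hfactor, hcubic, zero_mul])
  refine orderOf_eq_prime_pow (p := 2) (n := 1) (fun hsq ↦ hne ?_) hfour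
  rw [pow_one] at hsq
  have hbezout : (2 : ℚ) • (a - 1) = (a ^ 3 - a ^ 2 + a - 1) - (a ^ 2 - 1) * (a - 1) := by
    rw [ofNat_smul_eq_nsmul]
    noncomm_ring
  rw [hcubic, hsq, sub_self, zero_mul, sub_zero] at hbezout
  exact sub_eq_zero.1 ((smul_eq_zero.1 hbezout).resolve_left two_ne_zero)

lemma orderOf_eq_six_of_cubic_eq_zero (hne : a ≠ 1)
    (hcubic : a ^ 3 - 2 * a ^ 2 + 2 * a - 1 = 0) : orderOf a = 6 := by
  have hsix : a ^ 6 = 1 := by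
    have hfactor : a ^ 6 - 1 =
        (a ^ 3 - 2 * a ^ 2 + 2 * a - 1) * (a ^ 3 + 2 * a ^ 2 + 2 * a + 1) := by noncomm_ring
    exact sub_eq_zero.1 (by rw [hfactor, hcubic, zero_mul])
  have hsq : a ^ 2 ≠ 1 := fun hsq ↦ hne <| by
    have hbezout : (3 : ℚ) • (a - 1) =
        (a ^ 3 - 2 * a ^ 2 + 2 * a - 1) - (a ^ 2 - 1) * (a - 2) := by
      rw [ofNat_smul_eq_nsmul]
      noncomm_ring
    rw [hcubic, hsq, sub_self, zero_mul, sub_zero] at hbezout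
    exact sub_eq_zero.1 ((smul_eq_zero.1 hbezout).resolve_left three_ne_zero)
  have hcube : a ^ 3 ≠ 1 := fun hcube ↦ hne <| by
    have hbezout : (2 : ℚ) • (a - 1) =
        (a + 1) * (a ^ 3 - 2 * a ^ 2 + 2 * a - 1) - (a - 1) * (a ^ 3 - 1) := by
      rw [ofNat_smul_eq_nsmul]
      noncomm_ring
    rw [hcubic, hcube, sub_self, mul_zero, mul_zero, sub_zero] at hbezout
    exact sub_eq_zero.1 ((smul_eq_zero.1 hbezout).resolve_left two_ne_zero)
  refine orderOf_eq_of_pow_and_pow_div_prime (by norm_num) hsix fun p hp hdvd ↦ ?_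
  have hp_le : p ≤ 6 := Nat.le_of_dvd (by norm_num) hdvd
  interval_cases p <;> first | omega | simpa using hsq | simpa using hcube | norm_num at hp

variable {K V : Type*} [Field K] [CharZero K] [AddCommGroup V] [Module K V]
  [FiniteDimensional K V] {f : Module.End K V} {n : ℕ}

lemma orderOf_eq_one_of_cubic_eq_zero (hn : n ≠ 0) (hf : f ^ n = 1)
    (hcubic : f ^ 3 - 3 * f ^ 2 + 3 * f - 1 = 0) : orderOf f = 1 := by
  refine orderOf_eq_one_iff.2 (eq_one_of_pow_eq_one_of_isNilpotent_sub_one hn hf ⟨3, ?_⟩)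
  rw [← hcubic]
  noncomm_ring

lemma orderOf_eq_two_of_cubic_eq_zero (hn : n ≠ 0) (hf : f ^ n = 1) (hne : f ≠ 1)
    (hcubic : f ^ 3 + f ^ 2 - f - 1 = 0) : orderOf f = 2 := by
  have hnil : IsNilpotent (f ^ 2 - 1) := ⟨2, by
    have hfactor : (f ^ 2 - 1) ^ 2 = (f ^ 3 + f ^ 2 - f - 1) * (f - 1) := by noncomm_ring
    rw [hfactor, hcubic, zero_mul]⟩
  have hpow : (f ^ 2) ^ n = 1 := by rw [pow_right_comm, hf, one_pow]
  exact orderOf_eq_prime (eq_one_of_pow_eq_one_of_isNilpotent_sub_one hn hpow hnil) hne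

/-- The trace `1 + 2 cos (2π / n)` of a rotation of order `n` of three-dimensional space, for the
orders `n = 1, 2, 3, 4, 6` at which it is rational; `0` is a junk value at all other `n`. -/
def rotationTrace : ℕ → ℤ
  | 1 => 3
  | 2 => -1
  | 3 => 0
  | 4 => 1
  | 6 => 2
  | _ => 0

theorem orderOf_mem_and_trace_eq_rotationTrace {V : Type*} [AddCommGroup V] [Module ℚ V]
    {f : Module.End ℚ V} (hV : Module.finrank ℚ V = 3)
    (hdet : LinearMap.det f = 1) (hn : n ≠ 0) (hf : f ^ n = 1) :
    orderOf f ∈ ({1, 2, 3, 4, 6} : Finset ℕ) ∧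
      LinearMap.trace ℚ V f = rotationTrace (orderOf f) := by
  have : FiniteDimensional ℚ V := .of_finrank_pos (by omega)
  obtain ⟨t, ⟨ht_ge, ht_le⟩, ht, hchar⟩ := exists_trace_charpoly_of_pow_eq_one hV hdet hn hf
  have hcubic : f ^ 3 - t * f ^ 2 + t * f - 1 = 0 := by
    simpa [hchar] using LinearMap.aeval_self_charpoly f
  have hne : t ≠ 3 → f ≠ 1 := by
    rintro ht3 rfl
    rw [LinearMap.trace_one, hV] at ht
    exact ht3 (by exact_mod_cast ht.symm)
  rw [ht]
  interval_cases t
  · have hf2 : orderOf f = 2 :=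
      orderOf_eq_two_of_cubic_eq_zero hn hf (hne (by decide))
        (by simpa [sub_eq_add_neg] using hcubic)
    simp [hf2, rotationTrace]
  · have hf3 : orderOf f = 3 :=
      orderOf_eq_prime (sub_eq_zero.1 (by simpa using hcubic)) (hne (by decide))
    simp [hf3, rotationTrace]
  · have hf4 : orderOf f = 4 :=
      orderOf_eq_four_of_cubic_eq_zero (hne (by decide)) (by simpa using hcubic)
    simp [hf4, rotationTrace]
  · have hf6 : orderOf f = 6 :=
      orderOf_eq_six_of_cubic_eq_zero (hne (by decide)) (by simpa using hcubic)
    simp [hf6, rotationTrace]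
  · have hf1 : orderOf f = 1 := orderOf_eq_one_of_cubic_eq_zero hn hf (by simpa using hcubic)
    simp [hf1, rotationTrace]

end OrderAndTrace

section InvariantForm

variable {K G V : Type*} [Field K] [LinearOrder K] [IsStrictOrderedRing K] [Group G]
  [AddCommGroup V] [Module K V]

lemma exists_invariant_posDef_form [Finite G] [FiniteDimensional K V] (ρ : Representation K G V) :
    ∃ B : LinearMap.BilinForm K V, (∀ v w, B v w = B w v) ∧
      (∀ g v w, B (ρ g v) (ρ g w) = B v w) ∧ ∀ v ≠ 0, 0 < B v v := by
  cases nonempty_fintype G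
  let b := Module.finBasis K V
  let D : LinearMap.BilinForm K V :=
    ∑ i, (LinearMap.mul K K).compl₁₂ (b.coord i) (b.coord i)
  have hD : ∀ v w, D v w = ∑ i, b.coord i v * b.coord i w := fun v w ↦ by
    simp [D, LinearMap.sum_apply]
  let B : LinearMap.BilinForm K V := ∑ g, D.compl₁₂ (ρ g) (ρ g)
  have hB : ∀ v w, B v w = ∑ g, D (ρ g v) (ρ g w) := fun v w ↦ by
    simp [B, LinearMap.sum_apply]
  have hD_nonneg : ∀ v, 0 ≤ D v v := fun v ↦ by
    rw [hD]; exact Finset.sum_nonneg fun i _ ↦ mul_self_nonneg _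
  refine ⟨B, fun v w ↦ ?_, fun h v w ↦ ?_, fun v hv ↦ ?_⟩
  · simp only [hB, hD, mul_comm]
  · simp only [hB, ← Module.End.mul_apply, ← map_mul]
    exact Equiv.sum_comp (Equiv.mulRight h) fun g ↦ D (ρ g v) (ρ g w)
  · obtain ⟨i, hi⟩ : ∃ i, b.coord i v ≠ 0 := by
      by_contra! h
      exact hv (b.ext_elem fun i ↦ by simpa using h i)
    have hDv : 0 < D (ρ 1 v) (ρ 1 v) := by
      rw [map_one, Module.End.one_apply, hD]
      exact Finset.sum_pos' (fun j _ ↦ mul_self_nonneg _)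
        ⟨i, Finset.mem_univ i, mul_self_pos.2 hi⟩
    rw [hB]
    exact Finset.sum_pos' (fun g _ ↦ hD_nonneg _) ⟨1, Finset.mem_univ 1, hDv⟩

variable {ρ : Representation K G V} {B : LinearMap.BilinForm K V}

lemma form_apply_eq_zero_of_apply_mul_self_eq_neg (hsymm : ∀ v w, B v w = B w v)
    (hinv : ∀ g v w, B (ρ g v) (ρ g w) = B v w) {g : G} {v : V} (hv : ρ (g * g) v = -v) :
    B v (ρ g v) = 0 := by
  have hneg : B v (ρ g v) = -B v (ρ g v) :=
    calc B v (ρ g v) = B (ρ g v) (ρ (g * g) v) := by rw [map_mul, Module.End.mul_apply, hinv]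
      _ = -B v (ρ g v) := by rw [hv, map_neg, hsymm]
  linarith

lemma isOrtho_span_pair_of_mul_eq_inv_mul (hsymm : ∀ v w, B v w = B w v)
    (hinv : ∀ g v w, B (ρ g v) (ρ g w) = B v w) {r s : G} (hsr : s * r = r⁻¹ * s) {v : V}
    (hv : ρ (s * s) v = -v) {x y : V} (hx : x ∈ Submodule.span K {v, ρ r v})
    (hy : y ∈ Submodule.span K {v, ρ r v}) : B x (ρ s y) = 0 := by
  have hsr_sq : s * r * (s * r) = s * s := by rw [mul_assoc, hsr]; group
  have hrsr : r * (s * r) = s := by rw [hsr]; group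
  have hcomm : s * s * r = r * (s * s) := by
    calc s * s * r = r * (s * r) * (s * r) := by rw [hrsr, mul_assoc]
      _ = r * (s * s) := by rw [mul_assoc, hsr_sq]
  have hv_s : B v (ρ s v) = 0 := form_apply_eq_zero_of_apply_mul_self_eq_neg hsymm hinv hv
  have hrv_srv : B (ρ r v) (ρ s (ρ r v)) = 0 := by
    refine form_apply_eq_zero_of_apply_mul_self_eq_neg hsymm hinv ?_
    rw [← Module.End.mul_apply, ← map_mul, hcomm, map_mul, Module.End.mul_apply, hv, map_neg]
  have hv_srv : B v (ρ s (ρ r v)) = 0 := by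
    rw [← Module.End.mul_apply, ← map_mul]
    exact form_apply_eq_zero_of_apply_mul_self_eq_neg hsymm hinv (by rw [hsr_sq, hv])
  have hrv_sv : B (ρ r v) (ρ s v) = 0 := by
    rw [← hv_srv, ← hinv r v]
    simp only [← Module.End.mul_apply, ← map_mul, hrsr]
  obtain ⟨a, b, rfl⟩ := Submodule.mem_span_pair.1 hx
  obtain ⟨c, d, rfl⟩ := Submodule.mem_span_pair.1 hy
  simp only [map_add, map_smul, LinearMap.add_apply, LinearMap.smul_apply, hv_s, hrv_srv, hv_srv,
    hrv_sv, smul_zero, add_zero]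

lemma apply_mul_self_eq_of_apply_mul_self_eq_neg [Finite G] [FiniteDimensional K V]
    (hV : Module.finrank K V ≤ 3) {r s : G} (hsr : s * r = r⁻¹ * s) {v : V}
    (hv : ρ (s * s) v = -v) : ρ (r * r) v = v := by
  obtain ⟨B, hsymm, hinv, hpos⟩ := exists_invariant_posDef_form ρ
  rcases eq_or_ne v 0 with rfl | hv0
  · rw [map_zero]
  by_cases hli : LinearIndependent K ![v, ρ r v]
  · exfalso
    -- The span of `v, r v` and its image under `s` are orthogonal planes, too many for dimension 3.
    set P := Submodule.span K {v, ρ r v} with hP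
    have hdisj : Disjoint P (P.map (ρ s)) := by
      rw [Submodule.disjoint_def]
      rintro x hx ⟨y, hy, rfl⟩
      by_contra hne
      exact (hpos _ hne).ne' (isOrtho_span_pair_of_mul_eq_inv_mul hsymm hinv hsr hv hx hy)
    have hdim : Module.finrank K P = 2 := by
      rw [hP, ← Matrix.range_cons_cons_empty v (ρ r v) ![]]
      exact finrank_span_eq_card hli
    have hdim_map : Module.finrank K (P.map (ρ s)) = 2 := by
      rw [← hdim]
      exact (Submodule.equivMapOfInjective (ρ s) (ρ.apply_bijective s).injective P).symm.finrank_eq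
    have := Submodule.finrank_add_finrank_le_of_disjoint hdisj
    omega
  · rw [LinearIndependent.pair_iff' hv0] at hli
    push Not at hli
    obtain ⟨a, ha⟩ := hli
    have ha_sq : a * a = 1 := by
      have hBv := hinv r v v
      rw [← ha, map_smul, map_smul, LinearMap.smul_apply, smul_smul, smul_eq_mul] at hBv
      exact mul_right_cancel₀ (hpos v hv0).ne' (hBv.trans (one_mul _).symm)
    rw [map_mul, Module.End.mul_apply, ← ha, map_smul, ← ha, smul_smul, ha_sq, one_smul]

end InvariantForm

/-- A faithful three-dimensional representation by endomorphisms of determinant one: the abstract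
form of a subgroup of `SL(3, ℚ)`. -/
structure IsRotationRep {G V : Type*} [Group G] [AddCommGroup V] [Module ℚ V]
    (ρ : Representation ℚ G V) : Prop where
  finrank_eq : Module.finrank ℚ V = 3
  det_eq_one : ∀ g, LinearMap.det (ρ g) = 1
  injective : Function.Injective ρ

namespace IsRotationRep

variable {G V : Type*} [Group G] [AddCommGroup V] [Module ℚ V] {ρ : Representation ℚ G V}

lemma finiteDimensional (hρ : IsRotationRep ρ) : FiniteDimensional ℚ V :=
  .of_finrank_pos (by rw [hρ.finrank_eq]; norm_num)

lemma restrict (hρ : IsRotationRep ρ) (K : Subgroup G) :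
    IsRotationRep (ρ.comp K.subtype : Representation ℚ K V) where
  finrank_eq := hρ.finrank_eq
  det_eq_one k := hρ.det_eq_one k
  injective := hρ.injective.comp K.subtype_injective

variable [Finite G]

lemma orderOf_mem_and_character_eq (hρ : IsRotationRep ρ) (g : G) :
    orderOf g ∈ ({1, 2, 3, 4, 6} : Finset ℕ) ∧ ρ.character g = rotationTrace (orderOf g) := by
  rw [← orderOf_injective ρ hρ.injective g]
  exact orderOf_mem_and_trace_eq_rotationTrace hρ.finrank_eq (hρ.det_eq_one g)
    (orderOf_pos g).ne' (by rw [← map_pow, pow_orderOf_eq_one, map_one])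

lemma orderOf_mem (hρ : IsRotationRep ρ) (g : G) : orderOf g ∈ ({1, 2, 3, 4, 6} : Finset ℕ) :=
  (hρ.orderOf_mem_and_character_eq g).1

lemma character_eq (hρ : IsRotationRep ρ) (g : G) :
    ρ.character g = rotationTrace (orderOf g) :=
  (hρ.orderOf_mem_and_character_eq g).2

lemma neg_one_le_character (hρ : IsRotationRep ρ) (g : G) : -1 ≤ ρ.character g := by
  have hmem := hρ.orderOf_mem g
  rw [hρ.character_eq]
  generalize orderOf g = n at hmem
  fin_cases hmem <;> norm_num [rotationTrace]

lemma eq_one_of_three_le_character (hρ : IsRotationRep ρ) {g : G} (hg : 3 ≤ ρ.character g) :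
    g = 1 := by
  have hmem := hρ.orderOf_mem g
  rw [hρ.character_eq] at hg
  rw [← orderOf_eq_one_iff]
  generalize orderOf g = n at hmem hg
  fin_cases hmem <;> first | rfl | norm_num [rotationTrace] at hg

lemma mul_self_eq_one_of_orderOf_eq_four (hρ : IsRotationRep ρ) {r s : G}
    (hs : orderOf s = 4) (hsr : s * r = r⁻¹ * s) : r * r = 1 := by
  have := hρ.finiteDimensional
  have hs_sq : orderOf (s * s) = 2 := by
    rw [← pow_two, orderOf_pow' s two_ne_zero, hs]; norm_num
  have hs_four : s * s * (s * s) = 1 := by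
    rw [← pow_two (s * s), ← hs_sq, pow_orderOf_eq_one]
  have hfix : ρ (r * r) * (ρ (s * s) - 1) = ρ (s * s) - 1 := by
    refine LinearMap.ext fun v ↦ ?_
    refine apply_mul_self_eq_of_apply_mul_self_eq_neg hρ.finrank_eq.le hsr
      (v := (ρ (s * s) - 1) v) ?_
    rw [← Module.End.mul_apply, mul_sub, ← map_mul, hs_four, map_one, mul_one, ← neg_sub,
      LinearMap.neg_apply]
  have htrace : ρ.character (r * r * (s * s)) - ρ.character (r * r) = ρ.character (s * s) - 3 := by
    have := congrArg (LinearMap.trace ℚ V) hfix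
    rwa [mul_sub, mul_one, ← map_mul, map_sub, map_sub, LinearMap.trace_one, hρ.finrank_eq] at this
  have hs_char : ρ.character (s * s) = -1 := by
    rw [hρ.character_eq, hs_sq]; norm_num [rotationTrace]
  have := hρ.neg_one_le_character (r * r * (s * s))
  exact hρ.eq_one_of_three_le_character (by linarith)

end IsRotationRep

section Counting

/-- The number of elements of order `n` of a group. -/
noncomputable def numOfOrder (G : Type*) [Group G] (n : ℕ) : ℕ :=
  Nat.card {g : G // orderOf g = n}

variable {G : Type*} [Group G]

lemma numOfOrder_one : numOfOrder G 1 = 1 := by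
  simp only [numOfOrder, orderOf_eq_one_iff, Nat.card_unique]

lemma numOfOrder_eq_zero_iff [Finite G] {n : ℕ} :
    numOfOrder G n = 0 ↔ ∀ g : G, orderOf g ≠ n := by
  simp [numOfOrder, Finite.card_eq_zero_iff, isEmpty_subtype]

lemma numOfOrder_eq_zero_of_not_dvd_card [Finite G] {n : ℕ} (hn : ¬ n ∣ Nat.card G) :
    numOfOrder G n = 0 :=
  numOfOrder_eq_zero_iff.2 fun g hg ↦ hn (hg ▸ orderOf_dvd_natCard g)

lemma sum_comp_orderOf [Fintype G] {R : Type*} [Semiring R] (F : ℕ → R) {s : Finset ℕ}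
    (hs : ∀ g : G, orderOf g ∈ s) : ∑ g : G, F (orderOf g) = ∑ n ∈ s, numOfOrder G n * F n := by
  rw [← Finset.sum_fiberwise_of_maps_to (fun g _ ↦ hs g)]
  refine Finset.sum_congr rfl fun n _ ↦ ?_
  rw [Finset.sum_congr rfl fun g hg ↦ by rw [(Finset.mem_filter.1 hg).2], Finset.sum_const,
    nsmul_eq_mul, numOfOrder, Nat.card_eq_fintype_card, Fintype.card_subtype]

lemma sum_eq_apply_one_add_mul [Fintype G] {R : Type*} [Ring R] {F : G → R} {a : R}
    (hF : ∀ g ≠ 1, F g = a) : ∑ g, F g = F 1 + (Nat.card G - 1) * a := by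
  classical
  rw [Fintype.sum_eq_add_sum_compl 1, Finset.sum_congr rfl fun g hg ↦ hF g (by simpa using hg),
    Finset.sum_const, Finset.card_compl, Finset.card_singleton, nsmul_eq_mul,
    Nat.cast_pred Fintype.card_pos, Nat.card_eq_fintype_card]

end Counting

section Characters

variable {K G V : Type*} [Field K] [CharZero K] [Group G] [Fintype G] [AddCommGroup V] [Module K V]
  [FiniteDimensional K V] (ρ : Representation K G V)

lemma sum_character_eq_card_mul_finrank_invariants :
    ∑ g, ρ.character g = Nat.card G * Module.finrank K ρ.invariants := by
  have hcard : (Nat.card G : K) ≠ 0 := Nat.cast_ne_zero.2 Nat.card_pos.ne'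
  let := invertibleOfNonzero hcard
  rw [← ρ.card_inv_mul_sum_char_eq_finrank, mul_inv_cancel_left₀ hcard]

lemma sum_eq_zero_of_sum_character_eq_zero (hsum : ∑ g, ρ.character g = 0) : ∑ g, ρ g = 0 := by
  have hcard : (Nat.card G : K) ≠ 0 := Nat.cast_ne_zero.2 Nat.card_pos.ne'
  have hinv : ρ.invariants = ⊥ := by
    rw [sum_character_eq_card_mul_finrank_invariants] at hsum
    exact Submodule.finrank_eq_zero.1 (by exact_mod_cast (mul_eq_zero.1 hsum).resolve_left hcard)
  refine LinearMap.ext fun v ↦ ?_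
  have hmem : (∑ g, ρ g) v ∈ ρ.invariants := fun h ↦ by
    simp only [LinearMap.sum_apply, map_sum, ← Module.End.mul_apply, ← map_mul]
    exact Equiv.sum_comp (Equiv.mulLeft h) fun g ↦ ρ g v
  simpa [hinv] using hmem

lemma sum_character_mul_eq_zero_of_sum_character_eq_zero {H : Type*} [Group H]
    (ρ : Representation K H V) (φ : G →* H) (hsum : ∑ g, ρ.character (φ g) = 0) (h : H) :
    ∑ g, ρ.character (φ g * h) = 0 := by
  have hzero : ∑ g, ρ (φ g) = 0 := sum_eq_zero_of_sum_character_eq_zero (ρ.comp φ) hsum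
  calc ∑ g, ρ.character (φ g * h) = LinearMap.trace K V ((∑ g, ρ (φ g)) * ρ h) := by
        simp only [Representation.character, map_mul, Finset.sum_mul, map_sum]
    _ = 0 := by rw [hzero, zero_mul, map_zero]

lemma card_dvd_sum_numOfOrder_mul {H : Type*} [Group H] [Finite H] (ρ : Representation K H V)
    {F : ℕ → ℤ} {s : Finset ℕ} (hs : ∀ h : H, orderOf h ∈ s)
    (hF : ∀ h, ρ.character h = F (orderOf h)) :
    (Nat.card H : ℤ) ∣ ∑ n ∈ s, numOfOrder H n * F n := by
  cases nonempty_fintype H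
  have hsum := sum_character_eq_card_mul_finrank_invariants ρ
  simp only [hF] at hsum
  rw [← Int.cast_sum, sum_comp_orderOf F hs] at hsum
  exact ⟨Module.finrank K ρ.invariants, by exact_mod_cast hsum⟩

end Characters

namespace IsRotationRep

variable {G V : Type*} [Group G] [Finite G] [AddCommGroup V] [Module ℚ V]
  {ρ : Representation ℚ G V}

lemma card_eq_sum_numOfOrder (hρ : IsRotationRep ρ) :
    Nat.card G = 1 + numOfOrder G 2 + numOfOrder G 3 + numOfOrder G 4 + numOfOrder G 6 := by
  cases nonempty_fintype G
  have hsum := sum_comp_orderOf (fun _ ↦ 1) hρ.orderOf_mem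
  simpa [numOfOrder_one, add_assoc] using hsum

lemma card_dvd_sum_rotationTrace (hρ : IsRotationRep ρ) :
    (Nat.card G : ℤ) ∣ 3 - numOfOrder G 2 + numOfOrder G 4 + 2 * numOfOrder G 6 := by
  have := hρ.finiteDimensional
  convert card_dvd_sum_numOfOrder_mul ρ hρ.orderOf_mem hρ.character_eq using 1
  rw [Finset.sum_insert (by decide), Finset.sum_insert (by decide), Finset.sum_insert (by decide),
    Finset.sum_insert (by decide), Finset.sum_singleton, numOfOrder_one]
  push_cast [rotationTrace]
  ring

lemma card_dvd_sum_rotationTrace_sq (hρ : IsRotationRep ρ) :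
    (Nat.card G : ℤ) ∣ 9 + numOfOrder G 2 + numOfOrder G 4 + 4 * numOfOrder G 6 := by
  have := hρ.finiteDimensional
  have hchar : ∀ g, (ρ.tprod ρ).character g = ((rotationTrace (orderOf g) ^ 2 : ℤ) : ℚ) := by
    intro g
    rw [Representation.char_tensor, Pi.mul_apply, hρ.character_eq, Int.cast_pow, pow_two]
  convert card_dvd_sum_numOfOrder_mul (ρ.tprod ρ) (F := fun n ↦ rotationTrace n ^ 2)
    hρ.orderOf_mem hchar using 1
  rw [Finset.sum_insert (by decide), Finset.sum_insert (by decide), Finset.sum_insert (by decide),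
    Finset.sum_insert (by decide), Finset.sum_singleton, numOfOrder_one]
  push_cast [rotationTrace]
  ring

lemma card_dvd_eight_of_card_eq_two_pow (hρ : IsRotationRep ρ) {k : ℕ}
    (hk : Nat.card G = 2 ^ k) : Nat.card G ∣ 8 := by
  have hthree : ¬ 3 ∣ Nat.card G := fun h ↦ by
    rw [hk] at h
    exact absurd (Nat.prime_three.dvd_of_dvd_pow h) (by norm_num)
  have hn3 : numOfOrder G 3 = 0 := numOfOrder_eq_zero_of_not_dvd_card hthree
  have hn6 : numOfOrder G 6 = 0 := numOfOrder_eq_zero_of_not_dvd_card fun h ↦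
    hthree ((by norm_num : 3 ∣ 6).trans h)
  have hcard := hρ.card_eq_sum_numOfOrder
  have hsq := hρ.card_dvd_sum_rotationTrace_sq
  have height : (9 + numOfOrder G 2 + numOfOrder G 4 + 4 * numOfOrder G 6 : ℤ) =
      8 + Nat.card G := by rw [hcard, hn3, hn6]; push_cast; ring
  rw [height, dvd_add_self_right] at hsq
  exact_mod_cast hsq

lemma card_dvd_three_of_card_eq_three_pow (hρ : IsRotationRep ρ) {k : ℕ}
    (hk : Nat.card G = 3 ^ k) : Nat.card G ∣ 3 := by
  have heven : ∀ n, 2 ∣ n → numOfOrder G n = 0 := fun n hn ↦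
    numOfOrder_eq_zero_of_not_dvd_card fun h ↦ by
      rw [hk] at h
      exact absurd (Nat.prime_two.dvd_of_dvd_pow (hn.trans h)) (by norm_num)
  have hsum := hρ.card_dvd_sum_rotationTrace
  simp only [heven 2 (by norm_num), heven 4 (by norm_num), heven 6 (by norm_num), Nat.cast_zero,
    mul_zero, sub_zero, add_zero] at hsum
  exact_mod_cast hsum

theorem card_dvd_twentyFour (hρ : IsRotationRep ρ) : Nat.card G ∣ 24 := by
  refine (Nat.dvd_iff_prime_pow_dvd_dvd _ _).2 fun p k hp hdvd ↦ ?_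
  rcases Nat.eq_zero_or_pos k with rfl | hk
  · simp
  have : Fact p.Prime := ⟨hp⟩
  obtain ⟨K, hK⟩ := Sylow.exists_subgroup_card_pow_prime p hdvd
  obtain ⟨g, hg⟩ := exists_prime_orderOf_dvd_card' p ((dvd_pow_self p hk.ne').trans hdvd)
  have hmem := hρ.orderOf_mem g
  rw [hg] at hmem
  rw [← hK]
  fin_cases hmem
  · norm_num at hp
  · exact ((hρ.restrict K).card_dvd_eight_of_card_eq_two_pow hK).trans (by norm_num)
  · exact ((hρ.restrict K).card_dvd_three_of_card_eq_three_pow hK).trans (by norm_num)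
  · norm_num at hp
  · norm_num at hp

theorem not_four_dvd_card_of_orderOf_eq_three (hρ : IsRotationRep ρ) {c : G}
    (hc : orderOf c = 3) (hcomm : ∀ g, Commute g c) : ¬ 4 ∣ Nat.card G := by
  intro hdvd
  have := hρ.finiteDimensional
  obtain ⟨K, hK⟩ : ∃ K : Subgroup G, Nat.card K = 4 :=
    Sylow.exists_subgroup_card_pow_prime 2 (n := 2) hdvd
  cases nonempty_fintype K
  have horder : ∀ x : K, x ≠ 1 → orderOf (x : G) = 2 ∧ orderOf (x * c) = 6 := fun x hx ↦ by
    have hx_dvd : orderOf (x : G) ∣ 4 := by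
      rw [Subgroup.orderOf_coe]; exact hK ▸ orderOf_dvd_natCard x
    have hcop : (orderOf (x : G)).Coprime (orderOf c) := by
      rw [hc]; exact Nat.Coprime.coprime_dvd_left hx_dvd (by norm_num)
    have hmul := (hcomm x).orderOf_mul_eq_mul_orderOf_of_coprime hcop
    have hne : orderOf (x : G) ≠ 1 := by rwa [Ne, orderOf_eq_one_iff, OneMemClass.coe_eq_one]
    have hmem := hρ.orderOf_mem (x * c)
    rw [hmul, hc] at hmem ⊢
    simp only [Finset.mem_insert, Finset.mem_singleton] at hmem
    omega
  have hcard : (Nat.card K : ℚ) = 4 := by rw [hK]; norm_num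
  have hsum : ∑ x : K, ρ.character x = 0 := by
    rw [sum_eq_apply_one_add_mul (a := -1) fun x hx ↦ by
      rw [hρ.character_eq, (horder x hx).1]; norm_num [rotationTrace], hcard,
      hρ.character_eq, OneMemClass.coe_one, orderOf_one]
    norm_num [rotationTrace]
  have hsum_mul := sum_character_mul_eq_zero_of_sum_character_eq_zero ρ K.subtype hsum c
  rw [sum_eq_apply_one_add_mul (a := 2) fun x hx ↦ by
    rw [hρ.character_eq, K.subtype_apply, (horder x hx).2]; norm_num [rotationTrace], hcard,
    map_one, one_mul, hρ.character_eq, hc] at hsum_mul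
  norm_num [rotationTrace] at hsum_mul

end IsRotationRep

section Dihedral

variable {G : Type*} [Group G] {r s : G} {n : ℕ}

lemma zpow_cast_intCast (hr : r ^ n = 1) (k : ℤ) : r ^ ((k : ZMod n).cast : ℤ) = r ^ k := by
  rw [zpow_eq_zpow_iff_modEq]
  refine Int.ModEq.of_dvd (Int.natCast_dvd_natCast.2 (orderOf_dvd_of_pow_eq_one hr)) ?_
  rw [← ZMod.intCast_eq_intCast_iff, ZMod.intCast_cast, ZMod.cast_id', id]

/-- The homomorphism from the dihedral group determined by images `r` of the basic rotation and `s`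
of the basic reflection. -/
def dihedralLift (hr : r ^ n = 1) (hs : s * s = 1) (hsr : s * r = r⁻¹ * s) :
    DihedralGroup n →* G :=
  MonoidHom.mk' (fun
    | .r i => r ^ (i.cast : ℤ)
    | .sr i => s * r ^ (i.cast : ℤ)) <| by
  have hrs : ∀ k : ℤ, r ^ k * s = s * r ^ (-k) := fun k ↦ by
    simpa using ((SemiconjBy.zpow_right (a := s) (x := r) (y := r⁻¹) hsr) (-k)).symm
  rintro (i | i) (j | j) <;>
  obtain ⟨a, rfl⟩ := ZMod.intCast_surjective i <;>
  obtain ⟨b, rfl⟩ := ZMod.intCast_surjective j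
  · simp only [DihedralGroup.r_mul_r, ← Int.cast_add, zpow_cast_intCast hr, zpow_add]
  · simp only [DihedralGroup.r_mul_sr, ← Int.cast_sub, zpow_cast_intCast hr]
    rw [← mul_assoc, hrs, mul_assoc, ← zpow_add, neg_add_eq_sub]
  · simp only [DihedralGroup.sr_mul_r, ← Int.cast_add, zpow_cast_intCast hr, zpow_add, mul_assoc]
  · simp only [DihedralGroup.sr_mul_sr, ← Int.cast_sub, zpow_cast_intCast hr]
    rw [mul_assoc, ← mul_assoc (r ^ a), hrs, mul_assoc, ← mul_assoc s, hs, one_mul, ← zpow_add,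
      neg_add_eq_sub]

lemma dihedralLift_injective (hr : orderOf r = n) (hs : s * s = 1) (hsr : s * r = r⁻¹ * s)
    (hmem : s ∉ Subgroup.zpowers r) :
    Function.Injective (dihedralLift (hr ▸ pow_orderOf_eq_one r : r ^ n = 1) hs hsr) := by
  rw [injective_iff_map_eq_one]
  rintro (i | i) hi
  · obtain ⟨k, rfl⟩ := ZMod.intCast_surjective i
    have hrk : r ^ k = 1 := by
      rw [← zpow_cast_intCast (hr ▸ pow_orderOf_eq_one r : r ^ n = 1)]; exact hi
    rw [← orderOf_dvd_iff_zpow_eq_one, hr] at hrk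
    rw [(ZMod.intCast_zmod_eq_zero_iff_dvd k n).2 hrk, DihedralGroup.r_zero]
  · have hsi : s * r ^ (i.cast : ℤ) = 1 := hi
    refine absurd ?_ hmem
    rw [mul_eq_one_iff_eq_inv.1 hsi]
    exact inv_mem (Subgroup.zpow_mem_zpowers r _)

theorem nonempty_mulEquiv_dihedralGroup [NeZero n] (hG : Nat.card G = 2 * n) (hr : orderOf r = n)
    (hinv : ∀ s ∉ Subgroup.zpowers r, s * s = 1) : Nonempty (G ≃* DihedralGroup n) := by
  have : Finite G := Nat.finite_of_card_ne_zero (by rw [hG]; simp [NeZero.ne n])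
  have hne : Subgroup.zpowers r ≠ ⊤ := fun htop ↦ by
    have hcard := Nat.card_zpowers r
    rw [htop, Subgroup.card_top, hG, hr] at hcard
    have := NeZero.ne n
    omega
  obtain ⟨s, hs⟩ : ∃ s, s ∉ Subgroup.zpowers r := by
    simpa [Subgroup.eq_top_iff'] using hne
  have hss : s * s = 1 := hinv s hs
  have hsr : s * r = r⁻¹ * s := by
    have hsr_sq : s * r * (s * r) = 1 := hinv _ fun h ↦
      hs ((Subgroup.mul_mem_cancel_right _ (Subgroup.mem_zpowers r)).1 h)
    rw [mul_eq_one_iff_eq_inv.1 hsr_sq, mul_inv_rev, ← mul_eq_one_iff_eq_inv.1 hss]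
  have hinj := dihedralLift_injective hr hss hsr hs
  exact ⟨(MulEquiv.ofBijective _ ((Nat.bijective_iff_injective_and_card _).2
    ⟨hinj, by rw [hG, DihedralGroup.nat_card]⟩)).symm⟩

end Dihedral

section FiniteGroups

variable {G : Type*} [Group G]

lemma nonempty_mulEquiv_zmod [Finite G] {n : ℕ} {r : G} (hG : Nat.card G = n) (hr : orderOf r = n) :
    Nonempty (G ≃* Multiplicative (ZMod n)) := by
  subst hG
  exact ⟨(zmodCyclicMulEquiv (isCyclic_of_orderOf_eq_card r hr)).symm⟩

lemma mem_of_coprime_orderOf_index {N : Subgroup G} [N.Normal] {g : G}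
    (hg : (orderOf g).Coprime N.index) : g ∈ N := by
  rw [← QuotientGroup.eq_one_iff, ← orderOf_eq_one_iff]
  exact Nat.eq_one_of_dvd_coprimes hg (orderOf_map_dvd (QuotientGroup.mk' N) g)
    (orderOf_dvd_natCard _)

lemma not_dvd_index_zpowers [Finite G] {c : G} {p : ℕ} (hc : orderOf c = p)
    (hG : ¬ p * p ∣ Nat.card G) : ¬ p ∣ (Subgroup.zpowers c).index := by
  intro hdvd
  refine hG ?_
  rw [← (Subgroup.zpowers c).index_mul_card, Nat.card_zpowers, hc]
  exact Nat.mul_dvd_mul_right hdvd p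

lemma mem_zpowers_of_mem_normalizer [Finite G] {c g : G} {p : ℕ} (hp : p.Prime)
    (hc : orderOf c = p) (hg : orderOf g = p) (hG : ¬ p * p ∣ Nat.card G)
    (hmem : g ∈ Subgroup.normalizer (Subgroup.zpowers c)) : g ∈ Subgroup.zpowers c := by
  set N := Subgroup.normalizer (Subgroup.zpowers c : Set G)
  refine (Subgroup.mem_subgroupOf (h := (⟨g, hmem⟩ : N))).1 (mem_of_coprime_orderOf_index ?_)
  rw [Subgroup.orderOf_mk, hg, hp.coprime_iff_not_dvd]
  exact fun h ↦ not_dvd_index_zpowers hc hG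
    (h.trans (Subgroup.relIndex_dvd_index_of_le Subgroup.le_normalizer))

lemma mem_centralizer_of_prime_dvd_orderOf [Finite G] {c s : G}
    [hN : (Subgroup.zpowers c).Normal] {p : ℕ} (hp : p.Prime) (hc : orderOf c = p)
    (hs : p ∣ orderOf s) (hG : ¬ p * p ∣ Nat.card G) : s ∈ Subgroup.centralizer {c} := by
  have hpow : orderOf (s ^ (orderOf s / p)) = p := orderOf_pow_orderOf_div (orderOf_pos s).ne' hs
  have hmem : s ^ (orderOf s / p) ∈ Subgroup.zpowers c :=
    mem_zpowers_of_mem_normalizer hp hc hpow hG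
      (by rw [Subgroup.normalizer_eq_top_iff.2 hN]; trivial)
  have heq : Subgroup.zpowers (s ^ (orderOf s / p)) = Subgroup.zpowers c :=
    Subgroup.eq_of_le_of_card_ge (Subgroup.zpowers_le.2 hmem)
      (by rw [Nat.card_zpowers, Nat.card_zpowers, hc, hpow])
  obtain ⟨k, hk⟩ := Subgroup.mem_zpowers_iff.1 (heq ▸ Subgroup.mem_zpowers c)
  rw [Subgroup.mem_centralizer_singleton_iff, ← hk]
  exact ((Commute.refl s).pow_right _).zpow_right k

lemma orderOf_conj (g x : G) : orderOf (g * x * g⁻¹) = orderOf x :=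
  orderOf_injective (MulAut.conj g).toMonoidHom (MulAut.conj g).injective x

lemma normal_zpowers_of_forall_orderOf_eq {c : G}
    (h : ∀ g, orderOf g = orderOf c → g ∈ Subgroup.zpowers c) : (Subgroup.zpowers c).Normal := by
  refine ⟨fun x hx g ↦ ?_⟩
  obtain ⟨k, rfl⟩ := Subgroup.mem_zpowers_iff.1 hx
  rw [← conj_zpow]
  exact zpow_mem (h _ (orderOf_conj g c)) k

lemma normal_zpowers_of_normal_le_normalizer [Finite G] {c : G} {K : Subgroup G} [K.Normal]
    {p : ℕ} (hp : p.Prime) (hc : orderOf c = p) (hG : ¬ p * p ∣ Nat.card G) (hK : p ∣ Nat.card K)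
    (hle : K ≤ Subgroup.normalizer (Subgroup.zpowers c)) : (Subgroup.zpowers c).Normal := by
  refine normal_zpowers_of_forall_orderOf_eq fun g hg ↦ ?_
  refine mem_zpowers_of_mem_normalizer hp hc (hg.trans hc) hG
    (hle (mem_of_coprime_orderOf_index ?_))
  rw [hg, hc, hp.coprime_iff_not_dvd]
  exact fun h ↦ hG (K.index_mul_card ▸ Nat.mul_dvd_mul h hK)

lemma numOfOrder_subgroup_eq_ncard (K : Subgroup G) (n : ℕ) :
    numOfOrder K n = {g : G | g ∈ K ∧ orderOf g = n}.ncard := by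
  have himage : {g : G | g ∈ K ∧ orderOf g = n} = K.subtype '' {x | orderOf x = n} := by
    ext g
    simp only [Set.mem_ofPred_eq, Set.mem_image, K.subtype_apply, ← Subgroup.orderOf_coe]
    exact ⟨fun hg ↦ ⟨⟨g, hg.1⟩, hg.2, rfl⟩, fun ⟨x, hx, hxg⟩ ↦ hxg ▸ ⟨x.2, hx⟩⟩
  rw [himage, Set.ncard_image_of_injective _ K.subtype_injective]
  rfl

lemma numOfOrder_subgroup_le [Finite G] (K : Subgroup G) (n : ℕ) :
    numOfOrder K n ≤ numOfOrder G n := by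
  rw [numOfOrder_subgroup_eq_ncard]
  exact Set.ncard_le_ncard fun _ ↦ And.right

lemma mem_of_numOfOrder_le_numOfOrder_subgroup [Finite G] {K : Subgroup G} {g : G}
    (hle : numOfOrder G (orderOf g) ≤ numOfOrder K (orderOf g)) : g ∈ K := by
  rw [numOfOrder_subgroup_eq_ncard] at hle
  have heq : {x : G | x ∈ K ∧ orderOf x = orderOf g} = {x | orderOf x = orderOf g} :=
    Set.eq_of_subset_of_ncard_le (fun _ ↦ And.right) hle
  exact (heq.ge (rfl : orderOf g = orderOf g)).1

lemma mem_zpowers_of_numOfOrder_eq_totient [Finite G] {r g : G}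
    (hdvd : orderOf g ∣ orderOf r) (hcount : numOfOrder G (orderOf g) = (orderOf g).totient) :
    g ∈ Subgroup.zpowers r := by
  classical
  cases nonempty_fintype G
  refine mem_of_numOfOrder_le_numOfOrder_subgroup (hcount.trans (Eq.symm ?_)).le
  rw [numOfOrder, Nat.card_eq_fintype_card, Fintype.card_subtype]
  exact IsCyclic.card_orderOf_eq_totient (by rwa [Fintype.card_zpowers])

lemma numOfOrder_le_numOfOrder_mul [Finite G] {z : G} (hz : ∀ g, Commute z g) {n : ℕ}
    (hcop : (orderOf z).Coprime n) : numOfOrder G n ≤ numOfOrder G (orderOf z * n) :=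
  Nat.card_le_card_of_injective
    (fun x : {x : G // orderOf x = n} ↦ (⟨z * x, by
      rw [(hz x).orderOf_mul_eq_mul_orderOf_of_coprime (x.2.symm ▸ hcop), x.2]⟩ :
        {x : G // orderOf x = orderOf z * n}))
    fun _ _ h ↦ Subtype.ext (mul_left_cancel (Subtype.mk.inj h))

lemma mul_eq_mul_or_mul_eq_inv_mul_of_orderOf_eq_three {c : G} [hN : (Subgroup.zpowers c).Normal]
    (hc : orderOf c = 3) (g : G) : g * c = c * g ∨ g * c = c⁻¹ * g := by
  have hmem : g * c * g⁻¹ ∈ Subgroup.zpowers c := hN.conj_mem c (Subgroup.mem_zpowers c) g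
  have hpow : c ^ 3 = 1 := hc ▸ pow_orderOf_eq_one c
  rw [← mul_inv_eq_iff_eq_mul, ← mul_inv_eq_iff_eq_mul]
  obtain ⟨k, hk⟩ := Subgroup.mem_zpowers_iff.1 hmem
  have hne : g * c * g⁻¹ ≠ 1 := by
    rw [← orderOf_eq_one_iff.ne, orderOf_conj, hc]
    norm_num
  rw [← hk] at hne ⊢
  rw [← zpow_mod_orderOf, hc] at hne ⊢
  have hk_range : k % ((3 : ℕ) : ℤ) = 0 ∨ k % ((3 : ℕ) : ℤ) = 1 ∨ k % ((3 : ℕ) : ℤ) = 2 := by omega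
  rcases hk_range with h | h | h <;> rw [h] at hne ⊢
  · exact absurd (zpow_zero c) hne
  · exact .inl (zpow_one c)
  · exact .inr (eq_inv_of_mul_eq_one_left (by rw [← zpow_add_one]; exact_mod_cast hpow))

lemma index_centralizer_dvd_two_of_orderOf_eq_three {c : G} [(Subgroup.zpowers c).Normal]
    (hc : orderOf c = 3) : (Subgroup.centralizer {c}).index ∣ 2 := by
  by_cases htop : Subgroup.centralizer {c} = ⊤
  · rw [htop, Subgroup.index_top]; norm_num
  obtain ⟨a, ha⟩ : ∃ a, a ∉ Subgroup.centralizer {c} := by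
    simpa [Subgroup.eq_top_iff'] using htop
  refine (Subgroup.index_eq_two_iff_exists_notMem_and.2 ⟨a, ha, fun b ↦ ?_⟩).dvd
  simp only [Subgroup.mem_centralizer_singleton_iff] at ha ⊢
  have ha_inv := (mul_eq_mul_or_mul_eq_inv_mul_of_orderOf_eq_three hc a).resolve_left ha
  refine (mul_eq_mul_or_mul_eq_inv_mul_of_orderOf_eq_three hc b).symm.imp_left fun hb_inv ↦ ?_
  have hb_inv' : b * c⁻¹ = c * b := by
    rw [mul_inv_eq_iff_eq_mul, mul_assoc, hb_inv, mul_inv_cancel_left]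
  rw [mul_assoc, ha_inv, ← mul_assoc, hb_inv', mul_assoc]

lemma commute_of_mem_of_card_eq_two {K : Subgroup G} [hK : K.Normal] (hcard : Nat.card K = 2)
    {z : G} (hz : z ∈ K) (g : G) : Commute z g := by
  rcases eq_or_ne z 1 with rfl | hz_ne
  · exact Commute.one_left g
  have hconj_ne : g * z * g⁻¹ ≠ 1 := by rwa [Ne, conj_eq_one_iff]
  have hconj : (⟨g * z * g⁻¹, hK.conj_mem z hz g⟩ : K) = ⟨z, hz⟩ :=
    ((Nat.card_eq_two_iff' 1).1 hcard).unique (by simpa [Subtype.ext_iff] using hconj_ne)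
      (by simpa [Subtype.ext_iff] using hz_ne)
  exact (mul_inv_eq_iff_eq_mul.1 (Subtype.mk.inj hconj)).symm

lemma exists_injective_hom_perm_of_normalCore_eq_bot {H : Subgroup G} {n : ℕ} [NeZero n]
    (hindex : H.index = n) (hcore : H.normalCore = ⊥) :
    ∃ f : G →* Equiv.Perm (Fin n), Function.Injective f := by
  have hcard : Nat.card (G ⧸ H) = n := hindex
  have : Finite (G ⧸ H) := Nat.finite_of_card_ne_zero (by rw [hcard]; exact NeZero.ne n)
  let e := Equiv.permCongrHom (Finite.equivFinOfCardEq hcard)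
  refine ⟨e.toMonoidHom.comp (MulAction.toPermHom G (G ⧸ H)), e.injective.comp ?_⟩
  rwa [← MonoidHom.ker_eq_bot_iff, ← H.normalCore_eq_ker]

lemma normalCore_zpowers_eq_bot {c : G} {p : ℕ} (hp : p.Prime) (hc : orderOf c = p)
    (hN : ¬ (Subgroup.zpowers c).Normal) : (Subgroup.zpowers c).normalCore = ⊥ := by
  have hcard : Nat.card (Subgroup.zpowers c) = p := by rw [Nat.card_zpowers, hc]
  have : Finite (Subgroup.zpowers c) := Nat.finite_of_card_ne_zero (hcard ▸ hp.ne_zero)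
  have hle := (Subgroup.zpowers c).normalCore_le
  rcases (Nat.dvd_prime hp).1 (hcard ▸ Subgroup.card_dvd_of_le hle) with h | h
  · exact Subgroup.card_eq_one.1 h
  · refine absurd ?_ hN
    rw [← Subgroup.eq_of_le_of_card_ge hle (hcard.trans h.symm).le]
    infer_instance

lemma nonempty_mulEquiv_alternatingGroup_four {H : Subgroup G} (hG : Nat.card G = 12)
    (hindex : H.index = 4) (hcore : H.normalCore = ⊥) :
    Nonempty (G ≃* alternatingGroup (Fin 4)) := by
  obtain ⟨f, hf⟩ := exists_injective_hom_perm_of_normalCore_eq_bot hindex hcore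
  have hcard : Nat.card f.range = 12 := hG ▸ Nat.card_range_of_injective hf
  have hrange : f.range = alternatingGroup (Fin 4) := by
    refine Equiv.Perm.eq_alternatingGroup_of_index_eq_two ?_
    have := f.range.index_mul_card
    rw [hcard, Nat.card_perm, Nat.card_fin, show Nat.factorial 4 = 24 from rfl] at this
    omega
  exact ⟨(MonoidHom.ofInjective hf).trans (MulEquiv.subgroupCongr hrange)⟩

lemma nonempty_mulEquiv_perm_four {H : Subgroup G} (hG : Nat.card G = 24)
    (hindex : H.index = 4) (hcore : H.normalCore = ⊥) : Nonempty (G ≃* Equiv.Perm (Fin 4)) := by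
  obtain ⟨f, hf⟩ := exists_injective_hom_perm_of_normalCore_eq_bot hindex hcore
  refine ⟨MulEquiv.ofBijective f ((Nat.bijective_iff_injective_and_card f).2 ⟨hf, ?_⟩)⟩
  rw [hG, Nat.card_perm, Nat.card_fin]
  rfl

lemma index_normalizer_zpowers_eq_four (hG : Nat.card G = 24) {c : G} (hc : orderOf c = 3)
    (hN : ¬ (Subgroup.zpowers c).Normal) :
    (Subgroup.normalizer (Subgroup.zpowers c : Set G)).index = 4 := by
  have : Finite G := Nat.finite_of_card_ne_zero (by rw [hG]; norm_num)
  have hcard : Nat.card (Subgroup.zpowers c) = 3 := by rw [Nat.card_zpowers, hc]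
  have hindex : (Subgroup.zpowers c).index = 8 := by
    have := (Subgroup.zpowers c).index_mul_card
    rw [hcard, hG] at this
    omega
  let P : Sylow 3 G := (IsPGroup.of_card (p := 3) (n := 1) hcard).toSylow
    (by rw [hindex]; norm_num)
  have hmod : Nat.card (Sylow 3 G) % 3 = 1 := card_sylow_modEq_one 3 G
  have hdvd : Nat.card (Sylow 3 G) ∣ 8 := hindex ▸ P.card_dvd_index
  have hne : Nat.card (Sylow 3 G) ≠ 1 := fun h ↦ hN <| by
    rw [P.card_eq_index_normalizer, Subgroup.index_eq_one] at h
    exact Subgroup.normalizer_eq_top_iff.1 h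
  refine P.card_eq_index_normalizer.symm.trans ?_
  have hle := Nat.le_of_dvd (by norm_num) hdvd
  interval_cases Nat.card (Sylow 3 G) <;> omega

end FiniteGroups

section SmallGroups

variable {G : Type*} [Group G] [Finite G]

lemma nonempty_mulEquiv_of_card_eq_four (hG : Nat.card G = 4) :
    Nonempty (G ≃* Multiplicative (ZMod 4)) ∨ Nonempty (G ≃* DihedralGroup 2) := by
  by_cases hfour : ∃ r : G, orderOf r = 4
  · obtain ⟨r, hr⟩ := hfour
    exact .inl (nonempty_mulEquiv_zmod hG hr)
  obtain ⟨r, hr⟩ := exists_prime_orderOf_dvd_card' (G := G) 2 (by rw [hG]; norm_num)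
  refine .inr (nonempty_mulEquiv_dihedralGroup hG hr fun s _ ↦ ?_)
  rw [← pow_two, ← orderOf_dvd_iff_pow_eq_one]
  have hdvd : orderOf s ∣ 4 := hG ▸ orderOf_dvd_natCard s
  obtain ⟨k, hk, hsk⟩ := (Nat.dvd_prime_pow Nat.prime_two (m := 2)).1 hdvd
  have hk_ne : k ≠ 2 := fun h ↦ hfour ⟨s, by rw [hsk, h]; rfl⟩
  rw [hsk]
  exact pow_dvd_pow 2 (by omega : k ≤ 1)

lemma nonempty_mulEquiv_of_card_eq_six (hG : Nat.card G = 6) :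
    Nonempty (G ≃* Multiplicative (ZMod 6)) ∨ Nonempty (G ≃* DihedralGroup 3) := by
  by_cases hsix : ∃ r : G, orderOf r = 6
  · obtain ⟨r, hr⟩ := hsix
    exact .inl (nonempty_mulEquiv_zmod hG hr)
  obtain ⟨c, hc⟩ := exists_prime_orderOf_dvd_card' (G := G) 3 (by rw [hG]; norm_num)
  have hindex : (Subgroup.zpowers c).index = 2 := by
    have := (Subgroup.zpowers c).index_mul_card
    rw [Nat.card_zpowers, hc, hG] at this
    omega
  have hnormal := Subgroup.normal_of_index_eq_two hindex
  refine .inr (nonempty_mulEquiv_dihedralGroup hG hc fun s hs ↦ ?_)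
  have hs_three : orderOf s ≠ 3 := fun h ↦ hs <| by
    refine mem_of_coprime_orderOf_index ?_
    rw [h, hindex]
    norm_num
  have hs_dvd : orderOf s ∣ 6 := hG ▸ orderOf_dvd_natCard s
  have hs_six : orderOf s ≠ 6 := fun h ↦ hsix ⟨s, h⟩
  rw [← pow_two, ← orderOf_dvd_iff_pow_eq_one]
  have hle := Nat.le_of_dvd (by norm_num) hs_dvd
  interval_cases orderOf s <;> omega

end SmallGroups

namespace IsRotationRep

variable {G V : Type*} [Group G] [Finite G] [AddCommGroup V] [Module ℚ V]
  {ρ : Representation ℚ G V}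

lemma numOfOrder_two_ne_one_of_card_eq_eight (hρ : IsRotationRep ρ) (hG : Nat.card G = 8) {r : G}
    (hr : orderOf r = 4) : numOfOrder G 2 ≠ 1 := by
  intro hcount
  have hsq : ∀ x : G, orderOf x = 4 → orderOf (x * x) = 2 := fun x hx ↦ by
    rw [← pow_two, orderOf_pow' x two_ne_zero, hx]; norm_num
  have hunique : ∀ x y : G, orderOf x = 2 → orderOf y = 2 → x = y := fun x y hx hy ↦ by
    have := (Nat.card_eq_one_iff_unique.1 hcount).1
    exact congrArg Subtype.val (Subsingleton.elim (⟨x, hx⟩ : {g : G // orderOf g = 2}) ⟨y, hy⟩)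
  have hfour : ∀ x ∉ Subgroup.zpowers r, orderOf x = 4 := fun x hx ↦ by
    have hmem := hρ.orderOf_mem x
    have hdvd : orderOf x ∣ 8 := hG ▸ orderOf_dvd_natCard x
    have hone : orderOf x ≠ 1 := fun h ↦ hx (orderOf_eq_one_iff.1 h ▸ one_mem _)
    have htwo : orderOf x ≠ 2 := fun h ↦ hx <| by
      rw [hunique x (r * r) h (hsq r hr)]
      exact mul_mem (Subgroup.mem_zpowers r) (Subgroup.mem_zpowers r)
    generalize orderOf x = n at *
    fin_cases hmem <;> omega
  obtain ⟨s, hs⟩ : ∃ s, s ∉ Subgroup.zpowers r := by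
    by_contra! hall
    have := Subgroup.card_top (G := G)
    rw [← (Subgroup.eq_top_iff' _).2 hall, Nat.card_zpowers, hr, hG] at this
    omega
  have hsr : s * r ∉ Subgroup.zpowers r := fun h ↦
    hs ((Subgroup.mul_mem_cancel_right _ (Subgroup.mem_zpowers r)).1 h)
  have hrel : r * s * r = s := by
    have : s * r * (s * r) = s * s := hunique _ _ (hsq _ (hfour _ hsr)) (hsq s (hfour s hs))
    exact mul_left_cancel (a := s) (by simpa only [mul_assoc] using this)
  have hr_sq := hρ.mul_self_eq_one_of_orderOf_eq_four (hfour s hs)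
    (by rw [eq_inv_mul_iff_mul_eq, ← mul_assoc, hrel] : s * r = r⁻¹ * s)
  have := hsq r hr
  rw [hr_sq, orderOf_one] at this
  omega

lemma numOfOrder_of_card_eq_eight (hρ : IsRotationRep ρ) (hG : Nat.card G = 8) :
    numOfOrder G 2 = 5 ∧ numOfOrder G 4 = 2 := by
  have hthree : numOfOrder G 3 = 0 := numOfOrder_eq_zero_of_not_dvd_card (by rw [hG]; norm_num)
  have hsix : numOfOrder G 6 = 0 := numOfOrder_eq_zero_of_not_dvd_card (by rw [hG]; norm_num)
  have hcard := hρ.card_eq_sum_numOfOrder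
  have hdvd := hρ.card_dvd_sum_rotationTrace
  rw [hG] at hcard hdvd
  have hfour : numOfOrder G 4 ≠ 0 := by omega
  obtain ⟨r, hr⟩ : ∃ r : G, orderOf r = 4 := by
    simpa using numOfOrder_eq_zero_iff.not.1 hfour
  have htwo := hρ.numOfOrder_two_ne_one_of_card_eq_eight hG hr
  omega

lemma nonempty_mulEquiv_of_card_eq_eight (hρ : IsRotationRep ρ) (hG : Nat.card G = 8) :
    Nonempty (G ≃* DihedralGroup 4) := by
  obtain ⟨-, hfour⟩ := hρ.numOfOrder_of_card_eq_eight hG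
  obtain ⟨r, hr⟩ : ∃ r : G, orderOf r = 4 := by
    simpa using numOfOrder_eq_zero_iff.not.1 (hfour.trans_ne two_ne_zero)
  refine nonempty_mulEquiv_dihedralGroup hG hr fun s hs ↦ ?_
  have hs_four : orderOf s ≠ 4 := fun h ↦ hs <|
    mem_zpowers_of_numOfOrder_eq_totient (h.trans hr.symm).dvd (by rw [h, hfour]; rfl)
  have hs_dvd : orderOf s ∣ 8 := hG ▸ orderOf_dvd_natCard s
  have hmem := hρ.orderOf_mem s
  rw [← pow_two, ← orderOf_dvd_iff_pow_eq_one]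
  generalize orderOf s = n at *
  fin_cases hmem <;> omega

lemma not_four_dvd_card_centralizer (hρ : IsRotationRep ρ) {c : G} (hc : orderOf c = 3) :
    ¬ 4 ∣ Nat.card (Subgroup.centralizer {c}) := by
  have hmem : c ∈ Subgroup.centralizer {c} := Subgroup.mem_centralizer_singleton_iff.2 rfl
  refine (hρ.restrict _).not_four_dvd_card_of_orderOf_eq_three (c := ⟨c, hmem⟩)
    (by rwa [Subgroup.orderOf_mk]) fun g ↦ ?_
  exact Subtype.ext (Subgroup.mem_centralizer_singleton_iff.1 g.2)

lemma card_centralizer_eq_six (hρ : IsRotationRep ρ) (hG : Nat.card G = 12) {c : G}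
    [(Subgroup.zpowers c).Normal] (hc : orderOf c = 3) :
    Nat.card (Subgroup.centralizer {c}) = 6 := by
  have hmul := (Subgroup.centralizer {c}).index_mul_card
  have hfour := hρ.not_four_dvd_card_centralizer hc
  rcases (Nat.dvd_prime Nat.prime_two).1 (index_centralizer_dvd_two_of_orderOf_eq_three hc)
    with h | h <;> rw [h, hG] at hmul <;> omega

lemma exists_orderOf_eq_six_and_zpowers_eq_centralizer (hρ : IsRotationRep ρ)
    (hG : Nat.card G = 12) {c : G} [(Subgroup.zpowers c).Normal] (hc : orderOf c = 3) :
    ∃ r, orderOf r = 6 ∧ Subgroup.zpowers r = Subgroup.centralizer {c} := by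
  have hcard := hρ.card_centralizer_eq_six hG hc
  obtain ⟨t, ht⟩ := exists_prime_orderOf_dvd_card' (G := Subgroup.centralizer {c}) 2
    (by rw [hcard]; norm_num)
  rw [← Subgroup.orderOf_coe] at ht
  have hcomm : Commute (t : G) c := Subgroup.mem_centralizer_singleton_iff.1 t.2
  have hr : orderOf (t * c) = 6 := by
    rw [hcomm.orderOf_mul_eq_mul_orderOf_of_coprime (by rw [ht, hc]; norm_num), ht, hc]
  refine ⟨t * c, hr, Subgroup.eq_of_le_of_card_ge (Subgroup.zpowers_le.2 ?_) ?_⟩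
  · exact mul_mem t.2 (Subgroup.mem_centralizer_singleton_iff.2 rfl)
  · rw [Nat.card_zpowers, hr, hcard]

lemma nonempty_mulEquiv_dihedralGroup_six (hρ : IsRotationRep ρ) (hG : Nat.card G = 12) {c : G}
    [(Subgroup.zpowers c).Normal] (hc : orderOf c = 3) : Nonempty (G ≃* DihedralGroup 6) := by
  obtain ⟨r, hr, hzpowers⟩ := hρ.exists_orderOf_eq_six_and_zpowers_eq_centralizer hG hc
  refine nonempty_mulEquiv_dihedralGroup hG hr fun s hs ↦ ?_
  rw [hzpowers] at hs
  have hs_inv : s * c = c⁻¹ * s :=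
    (mul_eq_mul_or_mul_eq_inv_mul_of_orderOf_eq_three hc s).resolve_left
      (hs ∘ Subgroup.mem_centralizer_singleton_iff.2)
  have hs_three : ¬ 3 ∣ orderOf s := fun h ↦
    hs (mem_centralizer_of_prime_dvd_orderOf Nat.prime_three hc h (by rw [hG]; norm_num))
  have hs_four : orderOf s ≠ 4 := fun h ↦ by
    have hc_sq := hρ.mul_self_eq_one_of_orderOf_eq_four h hs_inv
    rw [← pow_two, ← orderOf_dvd_iff_pow_eq_one, hc] at hc_sq
    norm_num at hc_sq
  have hmem := hρ.orderOf_mem s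
  rw [← pow_two, ← orderOf_dvd_iff_pow_eq_one]
  generalize orderOf s = n at *
  fin_cases hmem <;> omega

lemma nonempty_mulEquiv_of_card_eq_twelve (hρ : IsRotationRep ρ) (hG : Nat.card G = 12) :
    Nonempty (G ≃* DihedralGroup 6) ∨ Nonempty (G ≃* alternatingGroup (Fin 4)) := by
  obtain ⟨c, hc⟩ := exists_prime_orderOf_dvd_card' (G := G) 3 (by rw [hG]; norm_num)
  by_cases hN : (Subgroup.zpowers c).Normal
  · exact .inl (hρ.nonempty_mulEquiv_dihedralGroup_six hG hc)
  have hindex : (Subgroup.zpowers c).index = 4 := by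
    have := (Subgroup.zpowers c).index_mul_card
    rw [Nat.card_zpowers, hc, hG] at this
    omega
  exact .inr (nonempty_mulEquiv_alternatingGroup_four hG hindex
    (normalCore_zpowers_eq_bot Nat.prime_three hc hN))

lemma not_normal_zpowers_of_card_eq_twentyFour (hρ : IsRotationRep ρ) (hG : Nat.card G = 24)
    {c : G} (hc : orderOf c = 3) : ¬ (Subgroup.zpowers c).Normal := by
  intro hN
  have hmul := (Subgroup.centralizer {c}).index_mul_card
  have hfour := hρ.not_four_dvd_card_centralizer hc
  rcases (Nat.dvd_prime Nat.prime_two).1 (index_centralizer_dvd_two_of_orderOf_eq_three hc)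
    with h | h <;> rw [h, hG] at hmul <;> omega

lemma numOfOrder_three_eq_two_of_commute (hρ : IsRotationRep ρ) (hG : Nat.card G = 24) {z : G}
    (hz : orderOf z = 2) (hcomm : ∀ g, Commute z g) : numOfOrder G 3 = 2 := by
  have hsix : numOfOrder G 3 ≤ numOfOrder G 6 := by
    simpa [hz] using numOfOrder_le_numOfOrder_mul hcomm (n := 3) (by rw [hz]; norm_num)
  obtain ⟨K, hK⟩ : ∃ K : Subgroup G, Nat.card K = 8 :=
    Sylow.exists_subgroup_card_pow_prime 2 (n := 3) (by rw [hG]; norm_num)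
  have htwo : 5 ≤ numOfOrder G 2 :=
    ((hρ.restrict K).numOfOrder_of_card_eq_eight hK).1 ▸ numOfOrder_subgroup_le K 2
  have hcard := hρ.card_eq_sum_numOfOrder
  have hdvd := hρ.card_dvd_sum_rotationTrace
  have hdvd_sq := hρ.card_dvd_sum_rotationTrace_sq
  rw [hG] at hcard hdvd hdvd_sq
  omega

lemma not_commute_of_card_eq_twentyFour (hρ : IsRotationRep ρ) (hG : Nat.card G = 24) {z : G}
    (hz : orderOf z = 2) : ¬ ∀ g, Commute z g := by
  intro hcomm
  have hcount := hρ.numOfOrder_three_eq_two_of_commute hG hz hcomm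
  obtain ⟨c, hc⟩ := exists_prime_orderOf_dvd_card' (G := G) 3 (by rw [hG]; norm_num)
  refine hρ.not_normal_zpowers_of_card_eq_twentyFour hG hc
    (normal_zpowers_of_forall_orderOf_eq fun g hg ↦ ?_)
  exact mem_zpowers_of_numOfOrder_eq_totient hg.dvd (by rw [hg, hc, hcount]; rfl)

lemma card_ne_two_of_normal_of_card_eq_twentyFour (hρ : IsRotationRep ρ) (hG : Nat.card G = 24)
    (K : Subgroup G) [K.Normal] : Nat.card K ≠ 2 := by
  intro hcard
  obtain ⟨z, hz⟩ := exists_prime_orderOf_dvd_card' (G := K) 2 hcard.symm.dvd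
  rw [← Subgroup.orderOf_coe] at hz
  exact hρ.not_commute_of_card_eq_twentyFour hG hz (commute_of_mem_of_card_eq_two hcard z.2)

lemma normalCore_normalizer_eq_bot (hρ : IsRotationRep ρ) (hG : Nat.card G = 24)
    {c : G} (hc : orderOf c = 3) :
    (Subgroup.normalizer (Subgroup.zpowers c : Set G)).normalCore = ⊥ := by
  have hN := hρ.not_normal_zpowers_of_card_eq_twentyFour hG hc
  set N := Subgroup.normalizer (Subgroup.zpowers c : Set G)
  have hcard : Nat.card N = 6 := by
    have := N.index_mul_card
    rw [index_normalizer_zpowers_eq_four hG hc hN, hG] at this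
    omega
  have hdvd : Nat.card N.normalCore ∣ 6 := hcard ▸ Subgroup.card_dvd_of_le N.normalCore_le
  have hthree : ¬ 3 ∣ Nat.card N.normalCore := fun h ↦
    hN (normal_zpowers_of_normal_le_normalizer Nat.prime_three hc (by rw [hG]; norm_num) h
      N.normalCore_le)
  have htwo := hρ.card_ne_two_of_normal_of_card_eq_twentyFour hG N.normalCore
  rw [← Subgroup.card_eq_one]
  have hle := Nat.le_of_dvd (by norm_num) hdvd
  interval_cases Nat.card N.normalCore <;> omega

lemma nonempty_mulEquiv_of_card_eq_twentyFour (hρ : IsRotationRep ρ) (hG : Nat.card G = 24) :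
    Nonempty (G ≃* Equiv.Perm (Fin 4)) := by
  obtain ⟨c, hc⟩ := exists_prime_orderOf_dvd_card' (G := G) 3 (by rw [hG]; norm_num)
  have hN := hρ.not_normal_zpowers_of_card_eq_twentyFour hG hc
  exact nonempty_mulEquiv_perm_four hG (index_normalizer_zpowers_eq_four hG hc hN)
    (hρ.normalCore_normalizer_eq_bot hG hc)

end IsRotationRep

/-- The standard action of `SL(n, ℤ)` on `ℚⁿ`. -/
noncomputable def rationalRep (n : ℕ) :
    Representation ℚ (Matrix.SpecialLinearGroup (Fin n) ℤ) (Fin n → ℚ) :=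
  (Matrix.toLinAlgEquiv' : Matrix (Fin n) (Fin n) ℚ ≃ₐ[ℚ] _).toMonoidHom.comp
    (Matrix.SpecialLinearGroup.coeMonoidHom.comp
      (Matrix.SpecialLinearGroup.map (Int.castRingHom ℚ)))

lemma isRotationRep_rationalRep : IsRotationRep (rationalRep 3) where
  finrank_eq := by simp
  det_eq_one g := (LinearMap.det_toLin' _).trans (Matrix.SpecialLinearGroup.det_coe _)
  injective := Matrix.toLinAlgEquiv'.injective.comp
    (Matrix.SpecialLinearGroup.coeMonoidHom_injective.comp
      Matrix.SpecialLinearGroup.map_intCast_injective)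

theorem stmt2_general {G V : Type*} [Group G] [Finite G] [Nontrivial G] [AddCommGroup V]
    [Module ℚ V] {ρ : Representation ℚ G V} (hρ : IsRotationRep ρ) :
    Nonempty (G ≃* Multiplicative (ZMod 2)) ∨
    Nonempty (G ≃* Multiplicative (ZMod 3)) ∨
    Nonempty (G ≃* Multiplicative (ZMod 4)) ∨
    Nonempty (G ≃* Multiplicative (ZMod 6)) ∨
    Nonempty (G ≃* DihedralGroup 2) ∨
    Nonempty (G ≃* DihedralGroup 3) ∨
    Nonempty (G ≃* DihedralGroup 4) ∨
    Nonempty (G ≃* DihedralGroup 6) ∨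
    Nonempty (G ≃* alternatingGroup (Fin 4)) ∨
    Nonempty (G ≃* Equiv.Perm (Fin 4)) := by
  have hcard : Nat.card G ∈ ({2, 3, 4, 6, 8, 12, 24} : Finset ℕ) := by
    have hdivisors : Nat.card G ∈ (24 : ℕ).divisors.erase 1 := by
      simp [Finite.one_lt_card.ne', hρ.card_dvd_twentyFour]
    exact hdivisors
  simp only [Finset.mem_insert, Finset.mem_singleton] at hcard
  rcases hcard with h | h | h | h | h | h | h
  · obtain ⟨r, hr⟩ := exists_prime_orderOf_dvd_card' (G := G) 2 h.symm.dvd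
    have := nonempty_mulEquiv_zmod h hr
    tauto
  · obtain ⟨r, hr⟩ := exists_prime_orderOf_dvd_card' (G := G) 3 h.symm.dvd
    have := nonempty_mulEquiv_zmod h hr
    tauto
  · have := nonempty_mulEquiv_of_card_eq_four h
    tauto
  · have := nonempty_mulEquiv_of_card_eq_six h
    tauto
  · have := hρ.nonempty_mulEquiv_of_card_eq_eight h
    tauto
  · have := hρ.nonempty_mulEquiv_of_card_eq_twelve h
    tauto
  · have := hρ.nonempty_mulEquiv_of_card_eq_twentyFour h
    tauto

/-- Every nontrivial finite subgroup of `SL(3,ℤ)` is isomorphic to one of: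
the cyclic groups `ℤ/2, ℤ/3, ℤ/4, ℤ/6`; the dihedral groups `D₄, D₆, D₈, D₁₂`
of orders `4, 6, 8, 12`; the alternating group `A₄`; or the symmetric group `S₄`. -/
theorem stmt2 (H : Subgroup (Matrix.SpecialLinearGroup (Fin 3) ℤ))
    (hfin : Finite H) (hnt : H ≠ ⊥) :
    Nonempty (H ≃* Multiplicative (ZMod 2)) ∨
    Nonempty (H ≃* Multiplicative (ZMod 3)) ∨
    Nonempty (H ≃* Multiplicative (ZMod 4)) ∨
    Nonempty (H ≃* Multiplicative (ZMod 6)) ∨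
    Nonempty (H ≃* DihedralGroup 2) ∨
    Nonempty (H ≃* DihedralGroup 3) ∨
    Nonempty (H ≃* DihedralGroup 4) ∨
    Nonempty (H ≃* DihedralGroup 6) ∨
    Nonempty (H ≃* alternatingGroup (Fin 4)) ∨
    Nonempty (H ≃* Equiv.Perm (Fin 4)) := by
  have : Nontrivial H := (Subgroup.nontrivial_iff_ne_bot H).2 hnt
  exact stmt2_general (isRotationRep_rationalRep.restrict H)
end

section
/- Each of the following groups admits an injective group homomorphism into SL(3,ℤ): the cyclic groups ℤ/2, ℤ/3, ℤ/4, ℤ/6; the dihedral groups D₄, D₆, D₈, D₁₂ of orders 4, 6, 8, 12 respectively; the alternating group A₄; and the symmetric group S₄. -/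
/-!
The group `GL(2, ℤ)` embeds in `SL(3, ℤ)` through `A ↦ diag(A, det A)`. If the exchange `J` of the
two coordinates conjugates `A ∈ SL(2, ℤ)` to its inverse, then `A` and `J` generate a dihedral
group, and such an `A` can be chosen of order 2, 3, 4 or 6. The symmetric group on `n + 1` letters
acts faithfully on the lattice of vectors of coordinate sum zero in `ℤⁿ⁺¹`, with determinant the
sign; for odd `n` the twist of this action by the sign has determinant one, and it is still faithful
for `n > 1`. The case `n = 3` gives `S₄`, hence `A₄`.
-/

open Equiv Matrix

section CyclicAndDihedral

variable {G : Type*} [Group G] {n : ℕ} {x y : G}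

/-- The homomorphism `ℤ/n → G` sending the generator to an element `x` with `x ^ n = 1`. -/
def zmodPowHom (hx : x ^ n = 1) : Multiplicative (ZMod n) →* G :=
  AddMonoidHom.toMultiplicativeLeft <| ZMod.lift n ⟨zmultiplesHom _ (Additive.ofMul x), by
    rw [zmultiplesHom_apply, natCast_zsmul, ← ofMul_pow, hx, ofMul_one]⟩

theorem zmodPowHom_ofAdd_intCast (hx : x ^ n = 1) (k : ℤ) :
    zmodPowHom hx (.ofAdd (k : ZMod n)) = x ^ k :=
  congrArg Additive.toMul (ZMod.lift_coe n _ k)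

theorem zmodPowHom_mem_zpowers (hx : x ^ n = 1) (i : Multiplicative (ZMod n)) :
    zmodPowHom hx i ∈ Subgroup.zpowers x := by
  obtain ⟨k, hk⟩ := ZMod.intCast_surjective i.toAdd
  exact ⟨k, by rw [← ofAdd_toAdd i, ← hk, zmodPowHom_ofAdd_intCast]⟩

theorem zmodPowHom_injective (hx : orderOf x = n) :
    Function.Injective (zmodPowHom (orderOf_dvd_iff_pow_eq_one.1 hx.dvd)) := by
  refine (injective_iff_map_eq_one _).2 fun i hi ↦ ?_
  obtain ⟨k, hk⟩ := ZMod.intCast_surjective i.toAdd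
  rw [← ofAdd_toAdd i, ← hk, zmodPowHom_ofAdd_intCast, ← orderOf_dvd_iff_zpow_eq_one, hx,
    ← ZMod.intCast_zmod_eq_zero_iff_dvd, hk] at hi
  exact toAdd_eq_zero.1 hi

theorem semiconjBy_zmodPowHom (hx : x ^ n = 1) (hyx : SemiconjBy y x x⁻¹)
    (i : Multiplicative (ZMod n)) :
    SemiconjBy y (zmodPowHom hx i) (zmodPowHom hx i⁻¹) := by
  obtain ⟨k, hk⟩ := zmodPowHom_mem_zpowers hx i
  simpa only [map_inv, ← hk, _root_.inv_zpow] using hyx.zpow_right k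

/-- The homomorphism from the dihedral group to `G` determined by elements `x` and `y` that
satisfy its defining relations `x ^ n = 1`, `y ^ 2 = 1` and `y x y⁻¹ = x⁻¹`. -/
def dihedralHom (hx : x ^ n = 1) (hy : y * y = 1) (hyx : SemiconjBy y x x⁻¹) :
    DihedralGroup n →* G where
  toFun
    | .r i => zmodPowHom hx (.ofAdd i)
    | .sr i => y * zmodPowHom hx (.ofAdd i)
  map_one' := map_one (zmodPowHom hx)
  map_mul' := by
    have sr_sub (i j : ZMod n) : y * zmodPowHom hx (.ofAdd (j - i)) =
        zmodPowHom hx (.ofAdd i) * (y * zmodPowHom hx (.ofAdd j)) := by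
      have hi := (semiconjBy_zmodPowHom hx hyx (.ofAdd (-i))).eq
      rw [← ofAdd_neg, neg_neg] at hi
      rw [← mul_assoc, ← hi, mul_assoc, ← map_mul, ← ofAdd_add, neg_add_eq_sub]
    rintro (i | i) (j | j)
    · exact map_mul (zmodPowHom hx) _ _
    · exact sr_sub i j
    · exact (congrArg (y * ·) (map_mul (zmodPowHom hx) _ _)).trans (mul_assoc _ _ _).symm
    · change zmodPowHom hx (.ofAdd (j - i)) = y * _ * (y * _)
      rw [mul_assoc, ← sr_sub, ← mul_assoc, hy, one_mul]

theorem dihedralHom_injective (hx : orderOf x = n) (hy : y * y = 1) (hyx : SemiconjBy y x x⁻¹)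
    (hmem : y ∉ Subgroup.zpowers x) :
    Function.Injective (dihedralHom (orderOf_dvd_iff_pow_eq_one.1 hx.dvd) hy hyx) := by
  refine (injective_iff_map_eq_one _).2 ?_
  rintro (i | i) hi
  · exact congrArg DihedralGroup.r
      ((injective_iff_map_eq_one _).1 (zmodPowHom_injective hx) (.ofAdd i) hi)
  · refine absurd ?_ hmem
    rw [eq_inv_of_mul_eq_one_left hi]
    exact inv_mem (zmodPowHom_mem_zpowers _ _)

end CyclicAndDihedral

section AxialRotation

/-- The block matrix `diag(A, 1)` with `A = !![a, -b; b, d]`; the shape of `A` and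
`det A = 1` ensure that exchanging the two coordinates conjugates `A` to its inverse. -/
def axialRotation (a b d : ℤ) (h : a * d + b * b = 1) : SpecialLinearGroup (Fin 3) ℤ :=
  ⟨!![a, -b, 0; b, d, 0; 0, 0, 1], by rw [det_fin_three]; simpa using h⟩

theorem coe_axialRotation {a b d : ℤ} (h : a * d + b * b = 1) :
    (axialRotation a b d h : Matrix (Fin 3) (Fin 3) ℤ) = !![a, -b, 0; b, d, 0; 0, 0, 1] :=
  rfl

/-- The half-turn `diag(J, -1)`, where `J` exchanges the first two coordinates. -/
def axisFlip : SpecialLinearGroup (Fin 3) ℤ :=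
  ⟨!![0, 1, 0; 1, 0, 0; 0, 0, -1], by decide⟩

theorem coe_axisFlip :
    (axisFlip : Matrix (Fin 3) (Fin 3) ℤ) = !![0, 1, 0; 1, 0, 0; 0, 0, -1] :=
  rfl

theorem axisFlip_mul_self : axisFlip * axisFlip = 1 := by decide

variable {a b d : ℤ} (h : a * d + b * b = 1)

theorem axialRotation_inv :
    (axialRotation a b d h)⁻¹ = axialRotation d (-b) a (by linear_combination h) := by
  refine inv_eq_of_mul_eq_one_right (Subtype.ext ?_)
  change (axialRotation a b d h : Matrix (Fin 3) (Fin 3) ℤ) * axialRotation d (-b) a _ = 1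
  rw [coe_axialRotation, coe_axialRotation, one_fin_three]
  simp [h, add_comm, mul_comm]

theorem semiconjBy_axisFlip_axialRotation :
    SemiconjBy axisFlip (axialRotation a b d h) (axialRotation a b d h)⁻¹ := by
  rw [axialRotation_inv]
  apply Subtype.ext
  simp [coe_axialRotation, coe_axisFlip]

theorem axisFlip_notMem_zpowers_axialRotation :
    axisFlip ∉ Subgroup.zpowers (axialRotation a b d h) := by
  let e : Fin 3 → ℤ := Pi.single 2 1
  have rotation_fixes : axialRotation a b d h ∈
      MulAction.stabilizer (SpecialLinearGroup (Fin 3) ℤ) e := by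
    rw [MulAction.mem_stabilizer_iff, Matrix.SpecialLinearGroup.smul_def, coe_axialRotation]
    ext i
    fin_cases i <;> simp [e]
  have flip_moves : axisFlip ∉ MulAction.stabilizer (SpecialLinearGroup (Fin 3) ℤ) e := by
    decide
  exact fun hmem ↦ flip_moves (Subgroup.zpowers_le.2 rotation_fixes hmem)

theorem exists_injective_dihedralGroup_hom_of_orderOf_eq {n : ℕ}
    (hn : orderOf (axialRotation a b d h) = n) :
    ∃ f : DihedralGroup n →* SpecialLinearGroup (Fin 3) ℤ, Function.Injective f :=
  ⟨_, dihedralHom_injective hn axisFlip_mul_self (semiconjBy_axisFlip_axialRotation h)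
    (axisFlip_notMem_zpowers_axialRotation h)⟩

theorem orderOf_axialRotation_neg_one_zero_neg_one :
    orderOf (axialRotation (-1) 0 (-1) rfl) = 2 :=
  (orderOf_eq_iff (by decide)).2 ⟨by decide, by decide⟩

theorem orderOf_axialRotation_zero_one_neg_one :
    orderOf (axialRotation 0 1 (-1) rfl) = 3 :=
  (orderOf_eq_iff (by decide)).2 ⟨by decide, by decide⟩

theorem orderOf_axialRotation_zero_one_zero : orderOf (axialRotation 0 1 0 rfl) = 4 :=
  (orderOf_eq_iff (by decide)).2 ⟨by decide, by decide⟩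

theorem orderOf_axialRotation_zero_one_one : orderOf (axialRotation 0 1 1 rfl) = 6 :=
  (orderOf_eq_iff (by decide)).2 ⟨by decide, by decide⟩

end AxialRotation

section StandardRepresentation

variable {ι : Type*} [Fintype ι] [DecidableEq ι]

/-- The standard representation of the symmetric group: the action on the integer vectors indexed
by `Option ι` with coordinate sum zero, in the basis `e (some j) - e none`. -/
def stdRep : Perm (Option ι) →* Matrix ι ι ℤ where
  toFun σ := of fun i j ↦
    (if σ (some j) = some i then 1 else 0) - if σ none = some i then 1 else 0
  map_one' := by
    ext i j
    simp [one_apply, eq_comm]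
  map_mul' σ τ := by
    ext i j
    let f (a : Option ι) : ℤ := (if σ a = some i then 1 else 0) - if σ none = some i then 1 else 0
    -- The sum over `ι` misses the index `none`, but `f none = 0`.
    have sum_f (a : Option ι) : ∑ k, f (some k) * (if a = some k then 1 else 0) = f a := by
      cases a <;> simp [f]
    calc
      _ = f (τ (some j)) - f (τ none) := (sub_sub_sub_cancel_right _ _ _).symm
      _ = ∑ k, f (some k) *
          ((if τ (some j) = some k then 1 else 0) - if τ none = some k then 1 else 0) := by
        simp only [mul_sub, Finset.sum_sub_distrib, sum_f]

theorem stdRep_apply (σ : Perm (Option ι)) (i j : ι) :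
    stdRep σ i j = (if σ (some j) = some i then 1 else 0) - if σ none = some i then 1 else 0 :=
  rfl

theorem stdRep_optionCongr (τ : Perm ι) : stdRep τ.optionCongr = τ⁻¹.permMatrix ℤ := by
  ext i j
  simp [stdRep_apply, PEquiv.toMatrix_apply, Equiv.symm_apply_eq, eq_comm (a := i)]

theorem eq_one_of_isDiag_stdRep [Nontrivial ι] {σ : Perm (Option ι)} (h : (stdRep σ).IsDiag) :
    σ = 1 := by
  have apply_iff {i j : ι} (hij : i ≠ j) : σ (some j) = some i ↔ σ none = some i := by
    have : stdRep σ i j = 0 := h hij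
    rw [stdRep_apply] at this
    split_ifs at this <;> simp_all
  have none_fixed : σ none = none := by
    by_contra hne
    obtain ⟨i, hi⟩ := Option.ne_none_iff_exists'.1 hne
    obtain ⟨j, hji⟩ := exists_ne i
    simpa using σ.injective (((apply_iff hji.symm).2 hi).trans hi.symm)
  ext1 a
  cases a with
  | none => exact none_fixed
  | some j =>
    obtain ⟨i, hi⟩ : ∃ i, σ (some j) = some i :=
      Option.ne_none_iff_exists'.1 fun hj ↦ by simpa using σ.injective (hj.trans none_fixed.symm)
    by_cases hij : i = j
    · rw [hi, hij, Perm.one_apply]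
    · simpa [none_fixed] using (apply_iff hij).1 hi

theorem det_stdRep [Nontrivial ι] (σ : Perm (Option ι)) : (stdRep σ).det = Perm.sign σ := by
  let detHom : Perm (Option ι) →* ℤˣ := (detMonoidHom.comp stdRep).toHomUnits
  have det_swap : ∃ σ, detHom σ = -1 := by
    obtain ⟨i, j, hij⟩ := exists_pair_ne ι
    refine ⟨(swap i j).optionCongr, Units.ext ?_⟩
    change (stdRep _).det = _
    rw [stdRep_optionCongr, det_permutation, Perm.sign_inv, Perm.sign_swap hij, Int.cast_id]
  have surjective : Function.Surjective detHom := fun u ↦ by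
    obtain rfl | rfl := Int.units_eq_one_or u
    · exact ⟨1, map_one detHom⟩
    · exact det_swap
  exact congrArg Units.val (DFunLike.congr_fun (Perm.eq_sign_of_surjective_hom surjective) σ)

/-- The standard representation tensored with the sign character, which has determinant one
when its dimension is odd. -/
def signedStdRep [Nontrivial ι] (hι : Odd (Fintype.card ι)) :
    Perm (Option ι) →* SpecialLinearGroup ι ℤ where
  toFun σ := ⟨(Perm.sign σ : ℤ) • stdRep σ, by
    rw [det_smul, det_stdRep, ← pow_succ, ← Units.val_pow_eq_pow_val,
      Int.units_pow_eq_pow_mod_two, Nat.even_iff.1 hι.add_one, pow_zero, Units.val_one]⟩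
  map_one' := Subtype.ext (by simp)
  map_mul' σ τ := Subtype.ext <| by
    change _ = ((Perm.sign σ : ℤ) • stdRep σ) * ((Perm.sign τ : ℤ) • stdRep τ)
    rw [smul_mul_smul_comm, ← Units.val_mul, ← map_mul, ← map_mul]

theorem signedStdRep_injective [Nontrivial ι] (hι : Odd (Fintype.card ι)) :
    Function.Injective (signedStdRep hι) := by
  refine (injective_iff_map_eq_one _).2 fun σ hσ ↦ eq_one_of_isDiag_stdRep fun i j hij ↦ ?_
  have entry : (Perm.sign σ : ℤ) * stdRep σ i j = (1 : Matrix ι ι ℤ) i j :=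
    congrFun₂ (congrArg Subtype.val hσ) i j
  rw [one_apply_ne hij] at entry
  exact (mul_eq_zero.1 entry).resolve_left (Units.ne_zero _)

end StandardRepresentation

/-- Each of the groups `ℤ/2, ℤ/3, ℤ/4, ℤ/6`, the dihedral groups `D₄, D₆, D₈, D₁₂`
(of orders `4, 6, 8, 12`), the alternating group `A₄` and the symmetric group `S₄`
admits an injective group homomorphism into `SL(3,ℤ)`. -/
theorem stmt3 :
    (∃ f : Multiplicative (ZMod 2) →* Matrix.SpecialLinearGroup (Fin 3) ℤ,
      Function.Injective f) ∧
    (∃ f : Multiplicative (ZMod 3) →* Matrix.SpecialLinearGroup (Fin 3) ℤ,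
      Function.Injective f) ∧
    (∃ f : Multiplicative (ZMod 4) →* Matrix.SpecialLinearGroup (Fin 3) ℤ,
      Function.Injective f) ∧
    (∃ f : Multiplicative (ZMod 6) →* Matrix.SpecialLinearGroup (Fin 3) ℤ,
      Function.Injective f) ∧
    (∃ f : DihedralGroup 2 →* Matrix.SpecialLinearGroup (Fin 3) ℤ,
      Function.Injective f) ∧
    (∃ f : DihedralGroup 3 →* Matrix.SpecialLinearGroup (Fin 3) ℤ,
      Function.Injective f) ∧
    (∃ f : DihedralGroup 4 →* Matrix.SpecialLinearGroup (Fin 3) ℤ,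
      Function.Injective f) ∧
    (∃ f : DihedralGroup 6 →* Matrix.SpecialLinearGroup (Fin 3) ℤ,
      Function.Injective f) ∧
    (∃ f : alternatingGroup (Fin 4) →* Matrix.SpecialLinearGroup (Fin 3) ℤ,
      Function.Injective f) ∧
    (∃ f : Equiv.Perm (Fin 4) →* Matrix.SpecialLinearGroup (Fin 3) ℤ,
      Function.Injective f) := by
  have odd_three : Odd (Fintype.card (Fin 3)) := by decide
  let φ : Perm (Fin 4) →* SpecialLinearGroup (Fin 3) ℤ :=
    (signedStdRep odd_three).comp (finSuccEquiv 3).permCongrHom.toMonoidHom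
  have hφ : Function.Injective φ :=
    (signedStdRep_injective odd_three).comp (finSuccEquiv 3).permCongrHom.injective
  exact ⟨⟨_, zmodPowHom_injective orderOf_axialRotation_neg_one_zero_neg_one⟩,
    ⟨_, zmodPowHom_injective orderOf_axialRotation_zero_one_neg_one⟩,
    ⟨_, zmodPowHom_injective orderOf_axialRotation_zero_one_zero⟩,
    ⟨_, zmodPowHom_injective orderOf_axialRotation_zero_one_one⟩,
    exists_injective_dihedralGroup_hom_of_orderOf_eq _ orderOf_axialRotation_neg_one_zero_neg_one,
    exists_injective_dihedralGroup_hom_of_orderOf_eq _ orderOf_axialRotation_zero_one_neg_one,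
    exists_injective_dihedralGroup_hom_of_orderOf_eq _ orderOf_axialRotation_zero_one_zero,
    exists_injective_dihedralGroup_hom_of_orderOf_eq _ orderOf_axialRotation_zero_one_one,
    ⟨φ.comp (alternatingGroup (Fin 4)).subtype, hφ.comp Subtype.val_injective⟩, ⟨φ, hφ⟩⟩
end

section
/- Every element of SL(3,ℤ) of finite order has order 1, 2, 3, 4, or 6. -/
/-!
Let `a` have order `m`. Its minimal polynomial over `ℚ` divides `X ^ m - 1 = ∏ d ∣ m, Φ_d`, and each
`Φ_d` is irreducible, so the minimal polynomial is `∏ d ∈ S, Φ_d` for some set `S` of divisors of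
`m`, and `m` is the least common multiple of `S`. Taking degrees, `∑ d ∈ S, φ d ≤ 3` for a `3 × 3`
matrix. This forces every `d ∈ S` to divide `12`, which leaves finitely many `S` to inspect.
-/

open Polynomial

theorem exists_subset_eq_prod_of_monic_of_dvd_prod {R ι : Type*} [CommRing R] [IsDomain R]
    {s : Finset ι} {f : ι → R[X]} (hmonic : ∀ i ∈ s, (f i).Monic) (hprime : ∀ i ∈ s, Prime (f i))
    {p : R[X]} (hp : p.Monic) (hdvd : p ∣ ∏ i ∈ s, f i) : ∃ t ⊆ s, p = ∏ i ∈ t, f i := by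
  classical
  obtain ⟨q, hq⟩ := hdvd
  obtain ⟨t, u, b, c, htu, -, hbc, hpt, -⟩ := mul_eq_mul_prime_prod hprime
    (hq.symm.trans (one_mul _).symm)
  have hts : t ⊆ s := htu ▸ Finset.subset_union_left
  have hassoc : Associated p (∏ i ∈ t, f i) := by
    rw [hpt]
    exact associated_unit_mul_left _ _ (.of_mul_eq_one c hbc.symm)
  exact ⟨t, hts, eq_of_monic_of_associated hp
    (monic_prod_of_monic t f fun i hi => hmonic i (hts hi)) hassoc⟩

theorem exists_subset_divisors_eq_prod_cyclotomic {m : ℕ} (hm : 0 < m) {p : ℚ[X]} (hp : p.Monic)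
    (hdvd : p ∣ X ^ m - 1) : ∃ S ⊆ m.divisors, p = ∏ d ∈ S, cyclotomic d ℚ := by
  rw [← prod_cyclotomic_eq_X_pow_sub_one hm ℚ] at hdvd
  exact exists_subset_eq_prod_of_monic_of_dvd_prod (fun d _ => cyclotomic.monic d ℚ)
    (fun d hd => (cyclotomic.irreducible_rat (Nat.pos_of_mem_divisors hd)).prime) hp hdvd

theorem prod_cyclotomic_dvd_X_pow_lcm_sub_one (R : Type*) [CommRing R] {S : Finset ℕ}
    (hS : 0 ∉ S) : ∏ d ∈ S, cyclotomic d R ∣ X ^ S.lcm id - 1 := by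
  have hlcm : S.lcm id ≠ 0 := by simpa [Finset.lcm_eq_zero_iff] using hS
  rw [← prod_cyclotomic_eq_X_pow_sub_one (Nat.pos_of_ne_zero hlcm) R]
  exact Finset.prod_dvd_prod_of_subset _ _ _ fun d hd =>
    Nat.mem_divisors.mpr ⟨Finset.dvd_lcm hd, hlcm⟩

theorem minpoly_dvd_X_pow_sub_one_iff (K : Type*) {A : Type*} [Field K] [Ring A] [Algebra K A]
    (a : A) (k : ℕ) : minpoly K a ∣ X ^ k - 1 ↔ a ^ k = 1 := by
  rw [minpoly.dvd_iff, map_sub, map_pow, aeval_X, map_one, sub_eq_zero]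

theorem exists_lcm_eq_orderOf_and_sum_totient_eq_natDegree_minpoly {A : Type*} [Ring A]
    [Algebra ℚ A] {a : A} (ha : IsOfFinOrder a) :
    ∃ S : Finset ℕ, 0 ∉ S ∧ S.lcm id = orderOf a ∧
      ∑ d ∈ S, d.totient = (minpoly ℚ a).natDegree := by
  have hdvd : minpoly ℚ a ∣ X ^ orderOf a - 1 :=
    (minpoly_dvd_X_pow_sub_one_iff ℚ a _).mpr (pow_orderOf_eq_one a)
  have hint : IsIntegral ℚ a :=
    ⟨X ^ orderOf a - 1, monic_X_pow_sub_C 1 ha.orderOf_pos.ne', by simp [pow_orderOf_eq_one]⟩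
  obtain ⟨S, hS, hprod⟩ :=
    exists_subset_divisors_eq_prod_cyclotomic ha.orderOf_pos (minpoly.monic hint) hdvd
  have hS0 : 0 ∉ S := fun h => by simpa using hS h
  refine ⟨S, hS0, dvd_antisymm ?_ ?_, ?_⟩
  · exact Finset.lcm_dvd fun d hd => Nat.dvd_of_mem_divisors (hS hd)
  · apply orderOf_dvd_of_pow_eq_one
    rw [← minpoly_dvd_X_pow_sub_one_iff ℚ, hprod]
    exact prod_cyclotomic_dvd_X_pow_lcm_sub_one ℚ hS0
  · rw [hprod, natDegree_prod_of_monic _ _ fun d _ => cyclotomic.monic d ℚ]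
    simp only [natDegree_cyclotomic]

theorem prime_pow_le_two_mul_totient {p : ℕ} (hp : p.Prime) (k : ℕ) :
    p ^ k ≤ 2 * (p ^ k).totient := by
  cases k with
  | zero => simp
  | succ k =>
    have hp2 : p ≤ 2 * (p - 1) := by have := hp.two_le; lia
    calc p ^ (k + 1) = p ^ k * p := pow_succ p k
      _ ≤ p ^ k * (2 * (p - 1)) := by gcongr
      _ = 2 * (p ^ (k + 1)).totient := by rw [Nat.totient_prime_pow_succ hp]; ring

theorem dvd_twelve_of_totient_le_three {d : ℕ} (hd : d ≠ 0) (h : d.totient ≤ 3) : d ∣ 12 := by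
  refine (Nat.dvd_iff_prime_pow_dvd_dvd 12 d).mpr fun p k hp hpk => ?_
  have htot : (p ^ k).totient ≤ 3 :=
    (Nat.le_of_dvd (Nat.totient_pos.mpr hd.pos) (Nat.totient_dvd_of_dvd hpk)).trans h
  have hle : p ^ k ≤ 6 := (prime_pow_le_two_mul_totient hp k).trans (by lia)
  have hpos : 0 < p ^ k := pow_pos hp.pos k
  generalize p ^ k = q at htot hle hpos ⊢
  revert htot
  interval_cases q <;> decide

theorem lcm_mem_of_sum_totient_le_three {S : Finset ℕ} (hS : 0 ∉ S)
    (h : ∑ d ∈ S, d.totient ≤ 3) : S.lcm id ∈ ({1, 2, 3, 4, 6} : Finset ℕ) := by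
  have hsub : S ⊆ Nat.divisors 12 := fun d hd => by
    have htot : d.totient ≤ 3 := (Finset.single_le_sum_of_canonicallyOrdered hd).trans h
    exact Nat.mem_divisors.mpr
      ⟨dvd_twelve_of_totient_le_three (ne_of_mem_of_not_mem hd hS) htot, by simp⟩
  have hcheck : ∀ T ∈ (Nat.divisors 12).powerset, ∑ d ∈ T, d.totient ≤ 3 →
      T.lcm id ∈ ({1, 2, 3, 4, 6} : Finset ℕ) := by
    decide
  exact hcheck S (Finset.mem_powerset.mpr hsub) h

theorem natDegree_minpoly_matrix_le_card {K n : Type*} [Field K] [Fintype n] [DecidableEq n]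
    (A : Matrix n n K) : (minpoly K A).natDegree ≤ Fintype.card n :=
  (natDegree_le_of_dvd A.minpoly_dvd_charpoly A.charpoly_monic.ne_zero).trans_eq
    A.charpoly_natDegree_eq_dim

theorem orderOf_map_coe_specialLinearGroup {n R S : Type*} [Fintype n] [DecidableEq n]
    [CommRing R] [Semiring S] (f : R →+* S) (hf : Function.Injective f)
    (M : Matrix.SpecialLinearGroup n R) :
    orderOf ((M : Matrix n n R).map f) = orderOf M :=
  calc orderOf ((M : Matrix n n R).map f)
    _ = orderOf (M : Matrix n n R) :=
      orderOf_injective (f.mapMatrix : Matrix n n R →+* Matrix n n S).toMonoidHom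
        (Matrix.map_injective hf) (M : Matrix n n R)
    _ = orderOf M :=
      orderOf_injective Matrix.SpecialLinearGroup.coeMonoidHom
        Matrix.SpecialLinearGroup.coeMonoidHom_injective M

theorem stmt4_general {n : Type*} [Fintype n] [DecidableEq n] (hn : Fintype.card n ≤ 3)
    (A : Matrix n n ℚ) (hfin : IsOfFinOrder A) :
    orderOf A = 1 ∨ orderOf A = 2 ∨ orderOf A = 3 ∨ orderOf A = 4 ∨ orderOf A = 6 := by
  obtain ⟨S, hS, hlcm, hsum⟩ := exists_lcm_eq_orderOf_and_sum_totient_eq_natDegree_minpoly hfin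
  have hle : ∑ d ∈ S, d.totient ≤ 3 := hsum.trans_le ((natDegree_minpoly_matrix_le_card A).trans hn)
  simpa [hlcm] using lcm_mem_of_sum_totient_le_three hS hle

/-- Every element of `SL(3,ℤ)` of finite order has order `1, 2, 3, 4`, or `6`. -/
theorem stmt4 (M : Matrix.SpecialLinearGroup (Fin 3) ℤ) (hfin : IsOfFinOrder M) :
    orderOf M = 1 ∨ orderOf M = 2 ∨ orderOf M = 3 ∨ orderOf M = 4 ∨ orderOf M = 6 := by
  have horder := orderOf_map_coe_specialLinearGroup (Int.castRingHom ℚ) Int.cast_injective M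
  exact horder ▸ stmt4_general (by simp) _ (orderOf_pos_iff.mp (horder ▸ hfin.orderOf_pos))
end

section
/- For every nontrivial finite subgroup H of SL(2,ℤ) there exist a matrix P ∈ GL(2,ℤ) and one of the four matrices M₂ = [[-1,0],[0,-1]], M₃ = [[0,-1],[1,-1]], M₄ = [[0,-1],[1,0]], M₆ = [[0,-1],[1,1]] such that H = P·⟨Mₖ⟩·P⁻¹, where ⟨Mₖ⟩ denotes the cyclic subgroup generated by Mₖ. In particular every nontrivial finite subgroup of SL(2,ℤ) is cyclic of order 2, 3, 4, or 6. -/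
/-- The matrix `[[-1,0],[0,-1]]` as an element of `SL(2,ℤ)`. -/
def KummerM2 : Matrix.SpecialLinearGroup (Fin 2) ℤ :=
  ⟨!![-1, 0; 0, -1], by norm_num [Matrix.det_fin_two_of]⟩

/-- The matrix `[[0,-1],[1,-1]]` as an element of `SL(2,ℤ)`. -/
def KummerM3 : Matrix.SpecialLinearGroup (Fin 2) ℤ :=
  ⟨!![0, -1; 1, -1], by norm_num [Matrix.det_fin_two_of]⟩

/-- The matrix `[[0,-1],[1,0]]` as an element of `SL(2,ℤ)`. -/
def KummerM4 : Matrix.SpecialLinearGroup (Fin 2) ℤ :=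
  ⟨!![0, -1; 1, 0], by norm_num [Matrix.det_fin_two_of]⟩

/-- The matrix `[[0,-1],[1,1]]` as an element of `SL(2,ℤ)`. -/
def KummerM6 : Matrix.SpecialLinearGroup (Fin 2) ℤ :=
  ⟨!![0, -1; 1, 1], by norm_num [Matrix.det_fin_two_of]⟩

/-!
Averaging the standard inner product shows that a finite group of real `2 × 2` matrices is conjugate
to an orthogonal one, so it fixes a point `τ` of the upper half plane. At a fixed point the
automorphy factor `cτ + d` is multiplicative and faithful, so a finite subgroup of `SL(2,ℤ)` embeds
in `ℂˣ` and is cyclic. A generator `g ≠ ±1` is elliptic, hence has trace `-1`, `0` or `1`. As a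
function of `v ∈ ℤ²`, `det (v, g v)` is a binary quadratic form of discriminant
`tr² - 4 ∈ {-3, -4}`, which takes the value `1` or `-1` by Hermite's bound. For such a `v`, the
vectors `v` and `g v` form a basis of `ℤ²` in which `g` becomes its companion matrix, one of
`M₃`, `M₄`, `M₆`.
-/

open Matrix UpperHalfPlane
open Matrix.SpecialLinearGroup (mapGL mapGL_injective det_mapGL toGL_inj toGL_injective)
open scoped MatrixGroups MatrixOrder ComplexOrder

section FiniteLinearGroups

variable {n 𝕜 G : Type*} [Fintype n] [DecidableEq n] [RCLike 𝕜] [Group G] [Finite G]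

lemma exists_posDef_forall_conjTranspose_mul_mul_eq (ρ : G →* GL n 𝕜) :
    ∃ S : Matrix n n 𝕜, S.PosDef ∧ ∀ g, (ρ g).valᴴ * S * (ρ g).val = S := by
  have := Fintype.ofFinite G
  refine ⟨∑ h, (ρ h).valᴴ * (ρ h).val, posDef_sum Finset.univ_nonempty fun h _ ↦ ?_, fun g ↦ ?_⟩
  · exact .conjTranspose_mul_self _ (mulVec_injective_of_isUnit (ρ h).isUnit)
  · rw [Finset.mul_sum, Finset.sum_mul]
    refine Fintype.sum_equiv (Equiv.mulRight g) _ _ fun h ↦ ?_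
    simp [Matrix.mul_assoc]

lemma exists_forall_conj_mem_unitaryGroup (ρ : G →* GL n 𝕜) :
    ∃ A : GL n 𝕜, ∀ g, (A * ρ g * A⁻¹).val ∈ unitaryGroup n 𝕜 := by
  obtain ⟨S, hS, hinv⟩ := exists_posDef_forall_conjTranspose_mul_mul_eq ρ
  obtain ⟨A, hA, rfl⟩ :=
    CStarAlgebra.isStrictlyPositive_iff_eq_star_mul_self.mp hS.isStrictlyPositive
  lift A to GL n 𝕜 using hA
  refine ⟨A, fun g ↦ mem_unitaryGroup_iff'.mpr ?_⟩
  calc star (A * ρ g * A⁻¹).val * (A * ρ g * A⁻¹).val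
      = (A⁻¹).valᴴ * ((ρ g).valᴴ * (star A.val * A.val) * (ρ g).val) * (A⁻¹).val := by
        simp only [Units.val_mul, star_eq_conjTranspose, conjTranspose_mul, Matrix.mul_assoc]
    _ = (A.val * (A⁻¹).val)ᴴ * (A.val * (A⁻¹).val) := by
        rw [hinv]
        simp only [star_eq_conjTranspose, conjTranspose_mul, Matrix.mul_assoc]
    _ = 1 := by simp

end FiniteLinearGroups

lemma smul_I_eq_I_of_mem_orthogonalGroup {k : GL (Fin 2) ℝ}
    (hk : k.val ∈ orthogonalGroup (Fin 2) ℝ) : k • I = I := by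
  have hortho : k.val * k.valᵀ = 1 := (mem_orthogonalGroup_iff (Fin 2) ℝ).mp hk
  have hcofactor : k.val.adjugate = k.val.det • k.valᵀ := by
    rw [← Matrix.mul_one k.val.adjugate, ← hortho, ← Matrix.mul_assoc, adjugate_mul,
      smul_mul, Matrix.one_mul]
  have hdet_sq : k.val.det * k.val.det = 1 := by simpa using congr(det $hortho)
  have hdiag : k 0 0 = k.val.det * k 1 1 := by
    simpa [adjugate_fin_two] using congr($hcofactor 1 1)
  have hoff : -k 0 1 = k.val.det * k 1 0 := by
    simpa [adjugate_fin_two] using congr($hcofactor 0 1)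
  rcases mul_self_eq_one_iff.mp hdet_sq with hdet | hdet
  · rw [gl_smul_I_eq_I_iff_of_pos (by simp [hdet])]
    grind
  · rw [gl_smul_I_eq_I_iff_of_neg (by simp [hdet])]
    grind

lemma exists_forall_smul_eq_self {G : Type*} [Group G] [Finite G] (ρ : G →* GL (Fin 2) ℝ) :
    ∃ τ : ℍ, ∀ g, ρ g • τ = τ := by
  obtain ⟨A, hA⟩ := exists_forall_conj_mem_unitaryGroup ρ
  refine ⟨A⁻¹ • I, fun g ↦ ?_⟩
  rw [eq_inv_smul_iff, smul_smul, smul_smul]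
  exact smul_I_eq_I_of_mem_orthogonalGroup (hA g)

lemma eq_one_of_smul_eq_self_of_denom_eq_one {g : GL (Fin 2) ℝ} (hg : 0 < g.val.det) {τ : ℍ}
    (hfix : g • τ = τ) (hdenom : denom g τ = 1) : g = 1 := by
  have hnum : num g τ = τ := by
    simpa [σ, hg, hdenom] using gl_smul_eq_iff_num_eq.mp hfix
  obtain ⟨hb, ha⟩ : g 0 0 * τ.re + g 0 1 = τ.re ∧ g 0 0 = 1 := by
    simpa [num, Complex.ext_iff, τ.im_ne_zero] using hnum
  obtain ⟨hd, hc⟩ : g 1 0 * τ.re + g 1 1 = 1 ∧ g 1 0 = 0 := by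
    simpa [denom, Complex.ext_iff, τ.im_ne_zero] using hdenom
  ext i j
  fin_cases i <;> fin_cases j <;> simp_all

theorem isCyclic_of_injective_of_det_pos {G : Type*} [Group G] [Finite G] (ρ : G →* GL (Fin 2) ℝ)
    (hρ : Function.Injective ρ) (hdet : ∀ g, 0 < (ρ g).val.det) : IsCyclic G := by
  obtain ⟨τ, hτ⟩ := exists_forall_smul_eq_self ρ
  let j : G →* ℂ :=
    { toFun g := denom (ρ g) τ
      map_one' := by simp
      map_mul' g h := by
        rw [map_mul, denom_cocycle_σ, hτ]
        simp [σ, hdet] }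
  refine isCyclic_of_injective_ringHom j <| (injective_iff_map_eq_one j).mpr fun g hg ↦ ?_
  exact (map_eq_one_iff ρ hρ).mp <| eq_one_of_smul_eq_self_of_denom_eq_one (hdet g) (hτ g) hg

lemma isElliptic_of_isOfFinOrder {g : GL (Fin 2) ℝ} (hdet : 0 < g.val.det) (hg : IsOfFinOrder g)
    (hcenter : g ∉ Subgroup.center (GL (Fin 2) ℝ)) : g.IsElliptic := by
  have : Finite (Subgroup.zpowers g) := finite_zpowers.mpr hg
  obtain ⟨τ, hτ⟩ := exists_forall_smul_eq_self (Subgroup.zpowers g).subtype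
  exact isElliptic_of_exists_smul_eq_self hdet hcenter ⟨τ, hτ ⟨g, Subgroup.mem_zpowers g⟩⟩

lemma det_val_mapGL {n R : Type*} (S : Type*) [Fintype n] [DecidableEq n] [CommRing R] [CommRing S]
    [Algebra R S] (g : Matrix.SpecialLinearGroup n R) : (mapGL S g).val.det = 1 :=
  congr(Units.val $(det_mapGL (S := S) g))

lemma isElliptic_mapGL_iff {g : SL(2, ℤ)} : (mapGL ℝ g).IsElliptic ↔ g.val.IsElliptic := by
  have hdiscr : (mapGL ℝ g).val.discr = (g.val.discr : ℝ) := by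
    rw [discr_fin_two, det_val_mapGL, discr_fin_two, g.det_coe]
    simp [trace_fin_two]
  rw [GeneralLinearGroup.IsElliptic, Matrix.IsElliptic, Matrix.IsElliptic, hdiscr, Int.cast_lt_zero]

lemma eq_one_or_eq_neg_one_of_mapGL_mem_center {R S : Type*} [CommRing R] [NoZeroDivisors R]
    [CommRing S] [Algebra R S] [FaithfulSMul R S] {g : SL(2, R)}
    (hg : mapGL S g ∈ Subgroup.center (GL (Fin 2) S)) : g = 1 ∨ g = -1 := by
  have hcenter : g ∈ Subgroup.center SL(2, R) := Subgroup.mem_center_iff.mpr fun h ↦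
    mapGL_injective (S := S) <| by
      simpa only [map_mul] using Subgroup.mem_center_iff.mp hg (mapGL S h)
  obtain ⟨r, hr, hscalar⟩ := Matrix.SpecialLinearGroup.mem_center_iff.mp hcenter
  rw [Fintype.card_fin, sq_eq_one_iff] at hr
  rcases hr with rfl | rfl
  · exact .inl <| Subtype.ext <| by simp [← hscalar]
  · exact .inr <| Subtype.ext <| by simp [← hscalar, -scalar_apply]

theorem isCyclic_of_finite_subgroup_SL2 {R : Type*} [CommRing R] [Algebra R ℝ] [FaithfulSMul R ℝ]
    (H : Subgroup SL(2, R)) [Finite H] : IsCyclic H :=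
  isCyclic_of_injective_of_det_pos ((mapGL ℝ).comp H.subtype)
    (mapGL_injective.comp H.subtype_injective) fun g ↦ (det_val_mapGL ℝ g.val).symm ▸ one_pos

section BinaryForms

/-- The value at `(x, y)` of the binary quadratic form with coefficients `a`, `b`, `c`; these are
explicit arguments, in the order for which `discrim a b c` is the discriminant of the form. -/
def binaryForm {R : Type*} [CommRing R] (a b c x y : R) : R := a * x ^ 2 + b * x * y + c * y ^ 2

variable {R : Type*} [CommRing R]

lemma binaryForm_shear_swap (a b c k x y : R) :
    binaryForm a b c (y + k * x) x = binaryForm (binaryForm a b c k 1) (b + 2 * a * k) a x y := by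
  simp only [binaryForm]
  ring

lemma discrim_shear_swap (a b c k : R) :
    discrim (binaryForm a b c k 1) (b + 2 * a * k) a = discrim a b c := by
  simp only [binaryForm, discrim]
  ring

lemma three_mul_sq_le_neg_discrim {a b c : ℤ} (hba : |b| ≤ |a|) (hac : |a| ≤ |c|)
    (h : discrim c b a < 0) : 3 * a ^ 2 ≤ -discrim c b a := by
  have hb_sq : b ^ 2 ≤ a ^ 2 := sq_le_sq.mpr hba
  unfold discrim at h ⊢
  have hac_pos : 0 < c * a := by nlinarith [sq_nonneg b]
  have ha_sq : a ^ 2 ≤ c * a := by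
    rw [← abs_of_pos hac_pos, abs_mul, ← sq_abs, sq]
    gcongr
  linarith

lemma exists_abs_add_two_mul_mul_le {a : ℤ} (ha : a ≠ 0) (b : ℤ) :
    ∃ k, |b + 2 * a * k| ≤ |a| := by
  obtain ⟨k, hk⟩ : 2 * a ∣ b.bmod (2 * a).natAbs - b := Int.natAbs_dvd.mp Int.dvd_bmod_sub_self
  have hpos : 0 < (2 * a).natAbs := by omega
  have hlower := Int.le_bmod (x := b) hpos
  have hupper := Int.bmod_le (x := b) hpos
  refine ⟨k, ?_⟩
  rw [← hk, add_sub_cancel, abs_le, Int.abs_eq_natAbs]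
  omega

lemma exists_three_mul_binaryForm_sq_le {a b c : ℤ} (h : discrim a b c < 0) :
    ∃ x y, binaryForm a b c x y ≠ 0 ∧ 3 * binaryForm a b c x y ^ 2 ≤ -discrim a b c := by
  induction hN : a.natAbs using Nat.strong_induction_on generalizing a b c with
  | _ N ih =>
    have ha : a ≠ 0 := by
      rintro rfl
      exact h.not_ge (by simpa [discrim] using sq_nonneg b)
    obtain ⟨k, hk⟩ := exists_abs_add_two_mul_mul_le ha b
    rw [← discrim_shear_swap a b c k] at h ⊢
    by_cases hlt : (binaryForm a b c k 1).natAbs < N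
    · obtain ⟨x, y, hxy⟩ := ih _ hlt h rfl
      exact ⟨y + k * x, x, by rwa [binaryForm_shear_swap]⟩
    · have hac : |a| ≤ |binaryForm a b c k 1| := by
        rw [Int.abs_eq_natAbs, Int.abs_eq_natAbs]
        omega
      exact ⟨1, 0, by simpa [binaryForm], by
        simpa [binaryForm] using three_mul_sq_le_neg_discrim hk hac h⟩

end BinaryForms

section Companion

variable {R : Type*} [CommRing R]

lemma discrim_eq_discr (g : Matrix (Fin 2) (Fin 2) R) :
    discrim (g 1 0) (g 1 1 - g 0 0) (-g 0 1) = g.discr := by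
  rw [discr_fin_two, trace_fin_two, det_fin_two, discrim]
  ring

lemma isConj_companion_of_isUnit_binaryForm {M g : GL (Fin 2) R}
    (hM : M.val = !![0, -g.val.det; 1, g.val.trace]) {x y : R}
    (hxy : IsUnit (binaryForm (g 1 0) (g 1 1 - g 0 0) (-g 0 1) x y)) : IsConj M g := by
  -- The columns of `B` are `v = (x, y)` and `g v`; the binary form is its determinant.
  let B : Matrix (Fin 2) (Fin 2) R :=
    !![x, g 0 0 * x + g 0 1 * y; y, g 1 0 * x + g 1 1 * y]
  have hB : IsUnit B.det := by
    convert hxy using 1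
    rw [det_fin_two_of, binaryForm]
    ring
  have hsemiconj : g.val * B = B * M.val := by
    rw [hM, det_fin_two, trace_fin_two, eta_fin_two g.val]
    ext i j
    fin_cases i <;> fin_cases j <;> simp [B] <;> ring
  exact isConj_iff.mpr ⟨GeneralLinearGroup.mk'' B hB,
    mul_inv_eq_iff_eq_mul.mpr <| Units.ext hsemiconj.symm⟩

lemma isConj_companion_of_isElliptic {M g : GL (Fin 2) ℤ}
    (hM : M.val = !![0, -g.val.det; 1, g.val.trace]) (hg : g.IsElliptic)
    (hdiscr : -12 < g.val.discr) : IsConj M g := by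
  obtain ⟨x, y, hne, hle⟩ :=
    exists_three_mul_binaryForm_sq_le ((discrim_eq_discr g.val).trans_lt hg)
  rw [discrim_eq_discr] at hle
  have habs : |binaryForm (g 1 0) (g 1 1 - g 0 0) (-g 0 1) x y| < 2 :=
    abs_lt_of_sq_lt_sq (by linarith) zero_le_two
  refine isConj_companion_of_isUnit_binaryForm hM (x := x) (y := y) (Int.isUnit_iff_abs_eq.mpr ?_)
  have := abs_pos.mpr hne
  omega

end Companion

section Conj

variable {n R : Type*} [Fintype n] [DecidableEq n] [CommRing R]
  {M g : Matrix.SpecialLinearGroup n R}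

lemma mem_zpowers_iff_exists_eq_conj {P : GL n R}
    (hP : P * M.toGL * P⁻¹ = g.toGL) (x : Matrix.SpecialLinearGroup n R) :
    x ∈ Subgroup.zpowers g ↔ ∃ k : ℤ, x.val = P.val * (M ^ k).val * (P⁻¹).val := by
  rw [Subgroup.mem_zpowers_iff]
  refine exists_congr fun k ↦ ?_
  rw [← toGL_inj, map_zpow, ← hP, conj_zpow, ← map_zpow, eq_comm,
    Units.ext_iff]
  rfl

lemma orderOf_eq_of_isConj_toGL (h : IsConj M.toGL g.toGL) : orderOf M = orderOf g := by
  obtain ⟨P, hP⟩ := h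
  rw [← orderOf_injective _ toGL_injective M, hP.orderOf_eq,
    orderOf_injective _ toGL_injective]

end Conj

lemma orderOf_mem_of_mem_kummer {M : SL(2, ℤ)}
    (hM : M ∈ ({KummerM2, KummerM3, KummerM4, KummerM6} : Set SL(2, ℤ))) :
    orderOf M ∈ ({2, 3, 4, 6} : Set ℕ) := by
  have h₂ : orderOf KummerM2 = 2 := orderOf_eq_prime (by decide) (by decide)
  have h₃ : orderOf KummerM3 = 3 := orderOf_eq_prime (by decide) (by decide)
  have h₄ : orderOf KummerM4 = 4 := orderOf_eq_prime_pow (p := 2) (n := 1) (by decide) (by decide)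
  have h₆ : orderOf KummerM6 = 6 := by
    refine (orderOf_eq_iff (by norm_num)).mpr ⟨by decide, fun m hlt hpos ↦ ?_⟩
    interval_cases m <;> decide
  rcases hM with rfl | rfl | rfl | rfl <;> simp [*]

lemma exists_mem_kummer_isConj_toGL {g : SL(2, ℤ)} (hg : IsOfFinOrder g) (hne : g ≠ 1) :
    ∃ M ∈ ({KummerM2, KummerM3, KummerM4, KummerM6} : Set SL(2, ℤ)),
      IsConj M.toGL g.toGL := by
  by_cases hneg : g = -1
  · have : g = KummerM2 := by rw [hneg]; decide
    exact ⟨KummerM2, by simp, this ▸ .refl _⟩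
  have hcenter : mapGL ℝ g ∉ Subgroup.center (GL (Fin 2) ℝ) := fun hc ↦
    (eq_one_or_eq_neg_one_of_mapGL_mem_center hc).elim hne hneg
  have hell : g.val.IsElliptic := isElliptic_mapGL_iff.mp <|
    isElliptic_of_isOfFinOrder ((det_val_mapGL ℝ g).symm ▸ one_pos) ((mapGL ℝ).isOfFinOrder hg)
      hcenter
  have hdiscr : g.val.discr = g.val.trace ^ 2 - 4 := by rw [discr_fin_two, g.det_coe, mul_one]
  have hconj {M : SL(2, ℤ)} (hM : M.val = !![0, -1; 1, g.val.trace]) : IsConj M.toGL g.toGL :=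
    isConj_companion_of_isElliptic (by simpa using hM) hell <| by
      change -12 < g.val.discr
      linarith [sq_nonneg g.val.trace]
  have htrace : |g.val.trace| < 2 :=
    abs_lt_of_sq_lt_sq (by linarith [hdiscr.symm.trans_lt hell]) zero_le_two
  obtain ht | ht | ht : g.val.trace = -1 ∨ g.val.trace = 0 ∨ g.val.trace = 1 := by
    rw [abs_lt] at htrace
    omega
  · exact ⟨KummerM3, by simp, hconj (by rw [ht]; rfl)⟩
  · exact ⟨KummerM4, by simp, hconj (by rw [ht]; rfl)⟩
  · exact ⟨KummerM6, by simp, hconj (by rw [ht]; rfl)⟩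

/-- For every nontrivial finite subgroup `H` of `SL(2,ℤ)` there exist `P ∈ GL(2,ℤ)` and
one of the four matrices `M₂, M₃, M₄, M₆` such that `H = P·⟨Mₖ⟩·P⁻¹`; in particular
every nontrivial finite subgroup of `SL(2,ℤ)` is cyclic of order `2, 3, 4`, or `6`. -/
theorem stmt5 (H : Subgroup (Matrix.SpecialLinearGroup (Fin 2) ℤ))
    (hfin : Finite H) (hnt : H ≠ ⊥) :
    (∃ (P : Matrix.GeneralLinearGroup (Fin 2) ℤ)
       (M : Matrix.SpecialLinearGroup (Fin 2) ℤ),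
      M ∈ ({KummerM2, KummerM3, KummerM4, KummerM6} :
        Set (Matrix.SpecialLinearGroup (Fin 2) ℤ)) ∧
      ∀ g : Matrix.SpecialLinearGroup (Fin 2) ℤ,
        g ∈ H ↔ ∃ n : ℤ,
          (g : Matrix (Fin 2) (Fin 2) ℤ) =
            (P : Matrix (Fin 2) (Fin 2) ℤ) * ((M ^ n : Matrix.SpecialLinearGroup (Fin 2) ℤ) :
              Matrix (Fin 2) (Fin 2) ℤ) * ((P⁻¹ : Matrix.GeneralLinearGroup (Fin 2) ℤ) :
              Matrix (Fin 2) (Fin 2) ℤ)) ∧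
    IsCyclic H ∧ Nat.card H ∈ ({2, 3, 4, 6} : Set ℕ) := by
  have hcyc : IsCyclic H := isCyclic_of_finite_subgroup_SL2 H
  obtain ⟨g, rfl⟩ := H.isCyclic_iff_exists_zpowers_eq_top.mp hcyc
  have hg_ne : g ≠ 1 := mt Subgroup.zpowers_eq_bot.mpr hnt
  obtain ⟨M, hM, hconj⟩ := exists_mem_kummer_isConj_toGL (finite_zpowers.mp hfin) hg_ne
  obtain ⟨P, hP⟩ := isConj_iff.mp hconj
  refine ⟨⟨P, M, hM, mem_zpowers_iff_exists_eq_conj hP⟩, hcyc, ?_⟩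
  rw [Nat.card_zpowers, ← orderOf_eq_of_isConj_toGL hconj]
  exact orderOf_mem_of_mem_kummer hM
end

section
/- Let a₁, …, a_l (l ≥ 1) be positive integers and let A = (ℝ/ℤ)⁴ be the real 4-dimensional torus with its structure of a topological abelian group. Then the closed subgroup K = {(x₁,…,x_l) ∈ A^l : a₁·x₁ + ⋯ + a_l·x_l = 0} has exactly g⁴ connected components, where g = gcd(a₁, …, a_l). -/
/-!
Write `a i = g * b i` with `g` the gcd, so that `∑ i, u i * b i = 1` for some integers `u i`. The
homomorphism `φ x = ∑ i, b i • x i` from `A ^ l` to `A` has the continuous section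
`t ↦ (u i • t)ᵢ`, so each fibre of `φ` is a continuous image of the connected group `A ^ l`. As `K`
is the preimage under `φ` of the `g`-torsion of `A`, its components correspond to those of the
`g`-torsion, which is finite, hence discrete, with `g ^ 4` elements.
-/

open Topology Submodule

section ConnectedFibers

variable {E A F : Type*} [AddGroup E] [TopologicalSpace E] [IsTopologicalAddGroup E]
  [ConnectedSpace E] [AddGroup A] [TopologicalSpace A] [FunLike F E A] [AddMonoidHomClass F E A]

theorem isConnected_restrictPreimage_fiber_of_continuous_section {φ : F} {s : A → E}
    (hφ : Continuous φ) (hs : Continuous s) (hφs : Function.RightInverse s φ) {T : Set A} (t : T) :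
    IsConnected (T.restrictPreimage φ ⁻¹' {t}) := by
  have map_retraction (y : E) : φ (y - s (φ y) + s t) = t := by
    rw [map_add, map_sub, hφs, hφs, sub_self, zero_add]
  let retraction (y : E) : φ ⁻¹' T :=
    ⟨y - s (φ y) + s t, by rw [Set.mem_preimage, map_retraction]; exact t.2⟩
  have continuous_retraction : Continuous retraction := by fun_prop
  have range_retraction : Set.range retraction = T.restrictPreimage φ ⁻¹' {t} := by
    apply Set.Subset.antisymm
    · rintro _ ⟨y, rfl⟩
      exact Subtype.ext (map_retraction y)
    · rintro x rfl
      exact ⟨x, Subtype.ext (sub_add_cancel _ _)⟩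
  rw [← range_retraction]
  exact isConnected_range continuous_retraction

theorem card_connectedComponents_preimage_of_continuous_section {φ : F} {s : A → E}
    (hφ : Continuous φ) (hs : Continuous s) (hφs : Function.RightInverse s φ) (T : Set A) :
    Nat.card (ConnectedComponents (φ ⁻¹' T)) = Nat.card (ConnectedComponents T) := by
  let restrictedSection (t : T) : φ ⁻¹' T := ⟨s t, by rw [Set.mem_preimage, hφs]; exact t.2⟩
  have isQuotientMap_restrict : IsQuotientMap (T.restrictPreimage φ) :=
    .of_inverse (f := restrictedSection) (by fun_prop) hφ.restrictPreimage
      fun t => Subtype.ext (hφs t)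
  exact Nat.card_congr <| .ofBijective _ <|
    isQuotientMap_restrict.isCoinducing.connectedComponentsMap_bijective
      (isConnected_restrictPreimage_fiber_of_continuous_section hφ hs hφs)

end ConnectedFibers

theorem card_connectedComponents_of_totallyDisconnectedSpace (X : Type*) [TopologicalSpace X]
    [TotallyDisconnectedSpace X] : Nat.card (ConnectedComponents X) = Nat.card X :=
  have mk_injective : Function.Injective (ConnectedComponents.mk : X → ConnectedComponents X) :=
    fun x y h => by simpa [ConnectedComponents.coe_eq_coe'] using h
  (Nat.card_congr (.ofBijective _ ⟨mk_injective, ConnectedComponents.surjective_coe⟩)).symm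

section BezoutRing

variable {R ι : Type*} [CommRing R] [IsBezout R] [NormalizedGCDMonoid R] [Fintype ι] [Nonempty ι]

theorem exists_eq_gcd_mul_and_sum_mul_eq_one (a : ι → R) :
    ∃ b u : ι → R, (∀ i, a i = Finset.univ.gcd a * b i) ∧ ∑ i, b i * u i = 1 := by
  obtain ⟨b, a_eq, gcd_b⟩ := Finset.univ.extract_gcd a Finset.univ_nonempty
  obtain ⟨u, gcd_eq_sum⟩ := Finset.univ.gcd_eq_sum_mul b
  exact ⟨b, u, fun i => a_eq i (Finset.mem_univ i), gcd_eq_sum.symm.trans gcd_b⟩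

theorem card_connectedComponents_sum_smul_eq_zero (M : Type*) [AddCommGroup M] [Module R M]
    [TopologicalSpace M] [IsTopologicalAddGroup M] [ContinuousConstSMul R M] [ConnectedSpace M]
    (a : ι → R) :
    Nat.card (ConnectedComponents {x : ι → M | ∑ i, a i • x i = 0}) =
      Nat.card (ConnectedComponents (torsionBy R M (Finset.univ.gcd a))) := by
  obtain ⟨b, u, a_eq, sum_eq_one⟩ := exists_eq_gcd_mul_and_sum_mul_eq_one a
  let φ : (ι → M) →ₗ[R] M := ∑ i, b i • LinearMap.proj i
  have φ_apply (x : ι → M) : φ x = ∑ i, b i • x i := by simp [φ]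
  have continuous_φ : Continuous φ := by
    simp only [funext φ_apply]
    fun_prop
  have φ_section : Function.RightInverse (fun (t : M) i => u i • t) φ := fun t => by
    simp_rw [φ_apply, smul_smul, ← Finset.sum_smul, sum_eq_one, one_smul]
  have solutions_eq : {x : ι → M | ∑ i, a i • x i = 0} =
      φ ⁻¹' (torsionBy R M (Finset.univ.gcd a)) := by
    ext x
    have sum_eq : ∑ i, a i • x i = Finset.univ.gcd a • φ x := by
      simp_rw [φ_apply, Finset.smul_sum, smul_smul, ← a_eq]
    simp [sum_eq]
  rw [solutions_eq]
  exact card_connectedComponents_preimage_of_continuous_section continuous_φ (by fun_prop)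
    φ_section _

end BezoutRing

theorem card_torsionBy_pi {R κ : Type*} [CommSemiring R] [Fintype κ] (M : κ → Type*)
    [∀ j, AddCommMonoid (M j)] [∀ j, Module R (M j)] (r : R) :
    Nat.card (torsionBy R (∀ j, M j) r) = ∏ j, Nat.card (torsionBy R (M j) r) := by
  have mem_torsionBy_pi (t : ∀ j, M j) :
      t ∈ torsionBy R (∀ j, M j) r ↔ ∀ j, t j ∈ torsionBy R (M j) r := by
    simp [funext_iff]
  rw [← Nat.card_pi]
  exact Nat.card_congr ((Equiv.subtypeEquivRight mem_torsionBy_pi).trans Equiv.subtypePiEquivPi)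

section AddCircle

variable {𝕜 : Type*} [Field 𝕜] [LinearOrder 𝕜] [IsStrictOrderedRing 𝕜] (p : 𝕜) [Fact (0 < p)]

theorem torsionBy_addCircle_eq_zmultiples {n : ℕ} (hn : 0 < n) :
    (torsionBy ℤ (AddCircle p) n).toAddSubgroup =
      AddSubgroup.zmultiples ((p / n : 𝕜) : AddCircle p) := by
  ext t
  rw [mem_toAddSubgroup, mem_torsionBy_iff, natCast_zsmul]
  constructor
  · intro ht
    obtain ⟨m, -, rfl⟩ := (AddCircle.nsmul_eq_zero_iff hn).mp ht
    have m_nsmul_period_div : m • (p / n) = m / n * p := by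
      rw [nsmul_eq_mul, mul_div_assoc', div_mul_eq_mul_div]
    exact ⟨m, by simp only [natCast_zsmul, ← AddCircle.coe_nsmul, m_nsmul_period_div]⟩
  · rintro ⟨m, rfl⟩
    have n_nsmul_period_div : n • ((p / n : 𝕜) : AddCircle p) = 0 := by
      simpa only [AddCircle.addOrderOf_period_div hn] using
        addOrderOf_nsmul_eq_zero ((p / n : 𝕜) : AddCircle p)
    simp [smul_comm n m, n_nsmul_period_div]

theorem card_torsionBy_addCircle {n : ℤ} (hn : n ≠ 0) :
    Nat.card (torsionBy ℤ (AddCircle p) n) = n.natAbs := by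
  have torsionBy_natAbs :
      torsionBy ℤ (AddCircle p) n = torsionBy ℤ (AddCircle p) n.natAbs := by
    ext t
    simp
  have natAbs_pos : 0 < n.natAbs := Int.natAbs_pos.mpr hn
  calc
    Nat.card (torsionBy ℤ (AddCircle p) n)
      = Nat.card (torsionBy ℤ (AddCircle p) n.natAbs).toAddSubgroup := by
        rw [torsionBy_natAbs]; rfl
    _ = addOrderOf ((p / n.natAbs : 𝕜) : AddCircle p) := by
        rw [torsionBy_addCircle_eq_zmultiples p natAbs_pos, Nat.card_zmultiples]
    _ = n.natAbs := AddCircle.addOrderOf_period_div natAbs_pos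

theorem card_torsionBy_torus (κ : Type*) [Fintype κ] {n : ℤ} (hn : n ≠ 0) :
    Nat.card (torsionBy ℤ (κ → AddCircle p) n) = n.natAbs ^ Fintype.card κ := by
  rw [card_torsionBy_pi, Finset.prod_const, card_torsionBy_addCircle p hn, Finset.card_univ]

end AddCircle

theorem natCast_finset_gcd {ι : Type*} (s : Finset ι) (a : ι → ℕ) :
    ((s.gcd a : ℕ) : ℤ) = s.gcd fun i => (a i : ℤ) := by
  induction s using Finset.cons_induction with
  | empty => simp
  | cons i s _ ih => rw [Finset.gcd_cons, Finset.gcd_cons, ← ih]; rfl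

theorem setOf_sum_nsmul_eq_zero {ι M : Type*} [Fintype ι] [AddCommGroup M] (a : ι → ℕ) :
    {x : ι → M | ∑ i, a i • x i = 0} = {x | ∑ i, (a i : ℤ) • x i = 0} := by
  simp only [natCast_zsmul]

theorem stmt12_general {ι κ : Type*} [Fintype ι] [Fintype κ] (p : ℝ) [Fact (0 < p)] (a : ι → ℤ)
    (ha : ∃ i, a i ≠ 0) :
    Nat.card (ConnectedComponents {x : ι → κ → AddCircle p | ∑ i, a i • x i = 0}) =
      (Finset.univ.gcd a).natAbs ^ Fintype.card κ := by
  obtain ⟨i, hi⟩ := ha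
  have : Nonempty ι := ⟨i⟩
  have gcd_ne_zero : Finset.univ.gcd a ≠ 0 := fun h =>
    hi (Finset.gcd_eq_zero_iff.mp h i (Finset.mem_univ i))
  have card_torsion := card_torsionBy_torus p κ gcd_ne_zero
  have : Finite (torsionBy ℤ (κ → AddCircle p) (Finset.univ.gcd a)) :=
    Nat.finite_of_card_ne_zero (by rw [card_torsion]; positivity)
  rw [card_connectedComponents_sum_smul_eq_zero,
    card_connectedComponents_of_totallyDisconnectedSpace, card_torsion]

/-- Let `a₁, …, a_l` (`l ≥ 1`) be positive integers and `A = (ℝ/ℤ)⁴`. The closed subgroup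
`K = {(x₁,…,x_l) ∈ A^l : a₁·x₁ + ⋯ + a_l·x_l = 0}` has exactly `g⁴` connected components,
where `g = gcd(a₁,…,a_l)`. -/
theorem stmt12 (l : ℕ) (hl : 1 ≤ l) (a : Fin l → ℕ) (ha : ∀ i, 0 < a i) :
    Nat.card (ConnectedComponents
      ↥{x : Fin l → (Fin 4 → AddCircle (1 : ℝ)) | ∑ i, a i • x i = 0}) =
      (Finset.univ.gcd a) ^ 4 := by
  have exists_ne_zero : ∃ i, (a i : ℤ) ≠ 0 := ⟨⟨0, hl⟩, Nat.cast_ne_zero.mpr (ha _).ne'⟩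
  rw [setOf_sum_nsmul_eq_zero, stmt12_general 1 _ exists_ne_zero, ← natCast_finset_gcd,
    Int.natAbs_natCast, Fintype.card_fin]
end

section
/- Every subgroup H of the binary tetrahedral group T whose order is different from 1 and from 3 contains the matrix −1 (the negative of the identity matrix). -/
/-- The matrix `I = [[i,0],[0,-i]]` as an element of `SL(2,ℂ)`. -/
def binTetraI : Matrix.SpecialLinearGroup (Fin 2) ℂ :=
  ⟨!![Complex.I, 0; 0, -Complex.I], by
    simp [Matrix.det_fin_two_of, Complex.I_mul_I]⟩

/-- The matrix `τ = -(1/2)·[[1+i,-1+i],[1+i,1-i]]` as an element of `SL(2,ℂ)`. -/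
noncomputable def binTetraTau : Matrix.SpecialLinearGroup (Fin 2) ℂ :=
  ⟨!![-(1 + Complex.I) / 2, -(-1 + Complex.I) / 2;
      -(1 + Complex.I) / 2, -(1 - Complex.I) / 2], by
    simp [Matrix.det_fin_two_of]
    ring_nf
    simp [Complex.I_sq]
    norm_num⟩

/-- The binary tetrahedral group `T`, the subgroup of `SL(2,ℂ)` generated by `I` and `τ`. -/
def binTetra : Subgroup (Matrix.SpecialLinearGroup (Fin 2) ℂ) :=
  Subgroup.closure {binTetraI, binTetraTau}

/-!
The quaternion group `Q = ⟨I, J, IJ⟩` with `J = τ I τ⁻¹` is normalized by `τ`, which permutes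
`I`, `J`, `IJ` cyclically, so `T = Q ⟨τ⟩` and `T / Q` is a quotient of the group `⟨τ⟩` of order 3.
Every nontrivial element of `Q` is `-1` or squares to `-1`. So a subgroup `H` of `T` avoiding `-1`
meets `Q` trivially and embeds into `T / Q`, whence its order divides 3.
-/

section SecondIsomorphism

variable {G : Type*} [Group G] {H K N : Subgroup G}

theorem relIndex_sup_right_of_le_normalizer (hK : K ≤ Subgroup.normalizer N) :
    N.relIndex (K ⊔ N) = N.relIndex K :=
  have := Subgroup.normal_subgroupOf_of_le_normalizer hK
  have := Subgroup.normal_subgroupOf_sup_of_le_normalizer hK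
  Nat.card_congr (QuotientGroup.quotientInfEquivProdNormalizerQuotient K N hK).symm.toEquiv

theorem relIndex_dvd_relIndex_of_le_normalizer (hHK : H ≤ K)
    (hK : K ≤ Subgroup.normalizer N) : N.relIndex H ∣ N.relIndex K := by
  rw [← relIndex_sup_right_of_le_normalizer (hHK.trans hK),
    ← relIndex_sup_right_of_le_normalizer hK,
    ← Subgroup.relIndex_mul_relIndex N (H ⊔ N) (K ⊔ N) le_sup_right (sup_le_sup_right hHK N)]
  exact dvd_mul_right _ _

theorem relIndex_eq_card_of_disjoint (hHN : Disjoint H N) : N.relIndex H = Nat.card H := by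
  rw [← Subgroup.inf_relIndex_left, hHN.eq_bot, Subgroup.relIndex_bot_left]

theorem card_dvd_card_of_le_sup_of_disjoint (hK : K ≤ Subgroup.normalizer N) (hH : H ≤ K ⊔ N)
    (hHN : Disjoint H N) : Nat.card H ∣ Nat.card K :=
  calc
    Nat.card H = N.relIndex H := (relIndex_eq_card_of_disjoint hHN).symm
    _ ∣ N.relIndex (K ⊔ N) := relIndex_dvd_relIndex_of_le_normalizer hH
      (sup_le hK Subgroup.le_normalizer)
    _ = N.relIndex K := relIndex_sup_right_of_le_normalizer hK
    _ ∣ Nat.card K := N.relIndex_dvd_card K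

end SecondIsomorphism

section QuaternionUnits

variable {G : Type*} [Group G]

/-- The generators `i`, `j`, `k = i * j` of the quaternion group. Keeping the redundant generator
`i * j` makes the set stable under cyclic permutation of the units. -/
def quaternionUnits (i j : G) : Set G :=
  {i, j, i * j}

/-- The subgroup generated by `i`, `j` and `i * j`: the image of the quaternion group when
`IsQuaternionPair i j` holds. -/
def quaternionSubgroup (i j : G) : Subgroup G :=
  Subgroup.closure (quaternionUnits i j)

variable [HasDistribNeg G]

/-- `i` and `j` satisfy the defining relations of the quaternion group, with the central involution
given by the negation of `G`. -/
structure IsQuaternionPair (i j : G) : Prop where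
  left_mul_self : i * i = -1
  right_mul_self : j * j = -1
  anticomm : j * i = -(i * j)

namespace IsQuaternionPair

variable {g i j t u x : G}

theorem mul_self_of_mem_units (h : IsQuaternionPair i j) (hg : g ∈ quaternionUnits i j) :
    g * g = -1 := by
  rcases hg with rfl | rfl | rfl
  · exact h.left_mul_self
  · exact h.right_mul_self
  · calc
      i * j * (i * j) = i * (j * i) * j := by simp only [mul_assoc]
      _ = -(i * i * (j * j)) := by simp only [h.anticomm, mul_neg, neg_mul, mul_assoc]
      _ = -1 := by rw [h.left_mul_self, h.right_mul_self, neg_mul_neg, one_mul]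

theorem inv_of_mem_units (h : IsQuaternionPair i j) (hg : g ∈ quaternionUnits i j) : g⁻¹ = -g :=
  inv_eq_of_mul_eq_one_right <| by rw [mul_neg, h.mul_self_of_mem_units hg, neg_neg]

theorem unit_mul_mem_or_neg_mem (h : IsQuaternionPair i j) (hg : g ∈ quaternionUnits i j)
    (hu : u ∈ insert 1 (quaternionUnits i j)) :
    g * u ∈ insert 1 (quaternionUnits i j) ∨ -(g * u) ∈ insert 1 (quaternionUnits i j) := by
  obtain ⟨hi, hj, hji⟩ := h
  have hi' (y : G) : i * (i * y) = -y := by rw [← mul_assoc, hi, neg_one_mul]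
  have hj' (y : G) : j * (j * y) = -y := by rw [← mul_assoc, hj, neg_one_mul]
  have hji' (y : G) : j * (i * y) = -(i * (j * y)) := by rw [← mul_assoc, hji, neg_mul, mul_assoc]
  rcases hg with rfl | rfl | rfl <;> rcases hu with rfl | rfl | rfl | rfl <;>
    simp [quaternionUnits, mul_assoc, *]

theorem mem_or_neg_mem_of_mem_subgroup (h : IsQuaternionPair i j)
    (hx : x ∈ quaternionSubgroup i j) :
    x ∈ insert 1 (quaternionUnits i j) ∨ -x ∈ insert 1 (quaternionUnits i j) := by
  have hmul (g y : G) (hg : g ∈ quaternionUnits i j) :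
      y ∈ insert 1 (quaternionUnits i j) ∨ -y ∈ insert 1 (quaternionUnits i j) →
        g * y ∈ insert 1 (quaternionUnits i j) ∨ -(g * y) ∈ insert 1 (quaternionUnits i j) := by
    rintro (hy | hy)
    · exact h.unit_mul_mem_or_neg_mem hg hy
    · simpa only [mul_neg, neg_neg, or_comm] using h.unit_mul_mem_or_neg_mem hg hy
  induction hx using Subgroup.closure_induction_left with
  | one => exact .inl (Set.mem_insert 1 _)
  | mul_left g hg y _ ih => exact hmul g y hg ih
  | inv_mul_cancel g hg y _ ih =>
    simpa only [h.inv_of_mem_units hg, neg_mul, neg_neg, or_comm] using hmul g y hg ih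

theorem mul_self_of_mem_subgroup (h : IsQuaternionPair i j) (hx : x ∈ quaternionSubgroup i j)
    (hx₁ : x ≠ 1) (hx₂ : x ≠ -1) : x * x = -1 := by
  rcases h.mem_or_neg_mem_of_mem_subgroup hx with hx | hx
  · exact h.mul_self_of_mem_units (hx.resolve_left hx₁)
  · rw [← neg_mul_neg]
    exact h.mul_self_of_mem_units (hx.resolve_left (mt neg_eq_iff_eq_neg.1 hx₂))

theorem neg_one_mem_zpowers_of_mem_subgroup (h : IsQuaternionPair i j)
    (hx : x ∈ quaternionSubgroup i j) (hx₁ : x ≠ 1) : -1 ∈ Subgroup.zpowers x := by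
  by_cases hx₂ : x = -1
  · exact hx₂ ▸ Subgroup.mem_zpowers x
  · rw [← h.mul_self_of_mem_subgroup hx hx₁ hx₂]
    exact mul_mem (Subgroup.mem_zpowers x) (Subgroup.mem_zpowers x)

theorem mem_normalizer_subgroup (h : IsQuaternionPair i j) (hti : t * i * t⁻¹ = j)
    (htj : t * j * t⁻¹ = i * j) : t ∈ Subgroup.normalizer (quaternionSubgroup i j : Set G) := by
  have htij : t * (i * j) * t⁻¹ = i :=
    calc
      t * (i * j) * t⁻¹ = j * (i * j) := by rw [← conj_mul, hti, htj]
      _ = -(i * (j * j)) := by rw [← mul_assoc, h.anticomm, neg_mul, mul_assoc]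
      _ = i := by rw [h.right_mul_self, mul_neg_one, neg_neg]
  have himage : MulAut.conj t '' quaternionUnits i j = {j, i * j, i} := by
    simp only [quaternionUnits, Set.image_insert_eq, Set.image_singleton, MulAut.conj_apply, hti,
      htj, htij]
  apply Subgroup.normalizer_le_normalizer_closure
  rw [Subgroup.mem_normalizer_iff_conj_image_eq, himage, quaternionUnits, Set.pair_comm (i * j) i,
    Set.insert_comm]

theorem card_dvd_orderOf_of_neg_one_notMem (h : IsQuaternionPair i j) (hti : t * i * t⁻¹ = j)
    (htj : t * j * t⁻¹ = i * j) {H : Subgroup G} (hH : H ≤ Subgroup.closure {i, t})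
    (hneg : -1 ∉ H) : Nat.card H ∣ orderOf t := by
  have hle : H ≤ Subgroup.zpowers t ⊔ quaternionSubgroup i j :=
    hH.trans <| (Subgroup.closure_le _).2 <| Set.pair_subset
      (Subgroup.mem_sup_right (Subgroup.subset_closure (Set.mem_insert i _)))
      (Subgroup.mem_sup_left (Subgroup.mem_zpowers t))
  have hdisj : Disjoint H (quaternionSubgroup i j) := by
    refine Subgroup.disjoint_def.2 fun {x} hxH hxQ ↦ ?_
    by_contra hx₁
    exact hneg (Subgroup.zpowers_le.2 hxH (h.neg_one_mem_zpowers_of_mem_subgroup hxQ hx₁))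
  rw [← Nat.card_zpowers]
  exact card_dvd_card_of_le_sup_of_disjoint
    (Subgroup.zpowers_le.2 (h.mem_normalizer_subgroup hti htj)) hle hdisj

end IsQuaternionPair

end QuaternionUnits

section BinaryTetrahedral

/-- The quaternion unit `J = [[0,i],[i,0]]`, the conjugate of `I` by `τ`, in `SL(2,ℂ)`. -/
def binTetraJ : Matrix.SpecialLinearGroup (Fin 2) ℂ :=
  ⟨!![0, Complex.I; Complex.I, 0], by simp [Matrix.det_fin_two_of]⟩

theorem coe_binTetraI :
    (binTetraI : Matrix (Fin 2) (Fin 2) ℂ) = !![Complex.I, 0; 0, -Complex.I] := rfl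

theorem coe_binTetraJ :
    (binTetraJ : Matrix (Fin 2) (Fin 2) ℂ) = !![0, Complex.I; Complex.I, 0] := rfl

theorem coe_binTetraTau :
    (binTetraTau : Matrix (Fin 2) (Fin 2) ℂ) =
      !![-(1 + Complex.I) / 2, -(-1 + Complex.I) / 2;
        -(1 + Complex.I) / 2, -(1 - Complex.I) / 2] := rfl

theorem isQuaternionPair_binTetraI_binTetraJ : IsQuaternionPair binTetraI binTetraJ where
  left_mul_self := by
    ext p q
    fin_cases p <;> fin_cases q <;> simp [coe_binTetraI]
  right_mul_self := by
    ext p q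
    fin_cases p <;> fin_cases q <;> simp [coe_binTetraJ]
  anticomm := by
    ext p q
    fin_cases p <;> fin_cases q <;> simp [coe_binTetraI, coe_binTetraJ]

theorem binTetraTau_conj_binTetraI : binTetraTau * binTetraI * binTetraTau⁻¹ = binTetraJ := by
  rw [mul_inv_eq_iff_eq_mul]
  ext p q
  fin_cases p <;> fin_cases q <;> simp [coe_binTetraI, coe_binTetraJ, coe_binTetraTau] <;>
    grind [Complex.I_mul_I]

theorem binTetraTau_conj_binTetraJ :
    binTetraTau * binTetraJ * binTetraTau⁻¹ = binTetraI * binTetraJ := by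
  rw [mul_inv_eq_iff_eq_mul]
  ext p q
  fin_cases p <;> fin_cases q <;> simp [coe_binTetraI, coe_binTetraJ, coe_binTetraTau] <;>
    grind [Complex.I_mul_I]

theorem binTetraTau_pow_three : binTetraTau ^ 3 = 1 := by
  rw [pow_three]
  ext p q
  fin_cases p <;> fin_cases q <;> simp [coe_binTetraTau] <;> grind [Complex.I_mul_I]

end BinaryTetrahedral

/-- Every subgroup `H` of the binary tetrahedral group `T` whose order is different
from 1 and from 3 contains the matrix `-1`. -/
theorem stmt14 (H : Subgroup (Matrix.SpecialLinearGroup (Fin 2) ℂ))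
    (hle : H ≤ binTetra) (h1 : Nat.card H ≠ 1) (h3 : Nat.card H ≠ 3) :
    ∃ x ∈ H, (x : Matrix (Fin 2) (Fin 2) ℂ) = -1 := by
  by_contra hneg
  have hH : -1 ∉ H := fun h ↦ hneg ⟨-1, h, by simp⟩
  have hdvd : Nat.card H ∣ 3 :=
    (isQuaternionPair_binTetraI_binTetraJ.card_dvd_orderOf_of_neg_one_notMem
      binTetraTau_conj_binTetraI binTetraTau_conj_binTetraJ hle hH).trans
      (orderOf_dvd_of_pow_eq_one binTetraTau_pow_three)
  exact ((Nat.dvd_prime Nat.prime_three).1 hdvd).elim h1 h3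
end

section
/- If H and K are two distinct subgroups of order 6 of the binary tetrahedral group T, then H and K together generate T, i.e. the smallest subgroup of T containing both H and K is T itself. -/
/-!
The generators satisfy `τ³ = 1` and `IτIτ = τ²I`. Put `J = τIτ⁻¹`. Then `IJI = J` and `JIJ = I`,
so `⟨I, J⟩` is a quotient of the quaternion group of order 8; it is normalized by `τ`, so the
order of `T` divides 24. A subgroup of index 2 would contain `τ`, which has odd order, and also
`I`, because the conjugate `τJτ⁻¹` of `I` is the product `IJ` of `I` and another conjugate; hence
there is none. Distinct subgroups `H` and `K` of order 6 have index dividing 4, so the index of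
`H ⊔ K` is a proper divisor of 4 other than 2.
-/

section General

variable {G : Type*} [Group G]

theorem sup_eq_top_of_index_dvd_prime_sq {p : ℕ} (hp : p.Prime)
    (hG : ∀ M : Subgroup G, M.index ≠ p) {H K : Subgroup G} (hH : H.index ∣ p ^ 2)
    (hK : K.index ∣ p ^ 2) (hne : H ≠ K) : H ⊔ K = ⊤ := by
  have eq_sup {L : Subgroup G} (hL : L.index ∣ p ^ 2) (hle : L ≤ H ⊔ K)
      (hsup : (H ⊔ K).index = p ^ 2) : L = H ⊔ K := by
    have : L.FiniteIndex := ⟨ne_zero_of_dvd_ne_zero (pow_ne_zero 2 hp.ne_zero) hL⟩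
    by_contra hlt
    exact (Subgroup.index_strictAnti (hle.lt_of_ne hlt)).not_ge
      (hsup ▸ Nat.le_of_dvd (pow_pos hp.pos 2) hL)
  have hdvd : (H ⊔ K).index ∣ p ^ 2 := (Subgroup.index_dvd_of_le le_sup_left).trans hH
  obtain ⟨k, hk, hindex⟩ := (Nat.dvd_prime_pow hp).mp hdvd
  interval_cases k
  · exact Subgroup.index_eq_one.mp (by simpa using hindex)
  · exact absurd (by simpa using hindex) (hG (H ⊔ K))
  · exact absurd ((eq_sup hH le_sup_left hindex).trans (eq_sup hK le_sup_right hindex).symm) hne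

theorem relIndex_sup_of_le_normalizer {H N : Subgroup G}
    (hle : H ≤ Subgroup.normalizer (N : Set G)) : N.relIndex (H ⊔ N) = N.relIndex H :=
  haveI := Subgroup.normal_subgroupOf_of_le_normalizer hle
  haveI := Subgroup.normal_subgroupOf_sup_of_le_normalizer hle
  Nat.card_congr (QuotientGroup.quotientInfEquivProdNormalizerQuotient H N hle).toEquiv.symm

theorem relIndex_zpowers_dvd {N : Subgroup G} {g : G} {n : ℕ}
    (hg : g ∈ Subgroup.normalizer (N : Set G)) (hn : g ^ n ∈ N) :
    N.relIndex (Subgroup.zpowers g) ∣ n := by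
  have := Subgroup.normal_subgroupOf_of_le_normalizer (Subgroup.zpowers_le.mpr hg)
  let q : Subgroup.zpowers g ⧸ N.subgroupOf (Subgroup.zpowers g) :=
    QuotientGroup.mk ⟨g, Subgroup.mem_zpowers g⟩
  have hgen : ∀ x, x ∈ Subgroup.zpowers q := by
    rintro ⟨_, k, rfl⟩
    exact ⟨k, rfl⟩
  have hpow : q ^ n = 1 := (QuotientGroup.eq_one_iff _).mpr hn
  calc N.relIndex (Subgroup.zpowers g) = orderOf q :=
        (orderOf_eq_card_of_forall_mem_zpowers hgen).symm
    _ ∣ n := orderOf_dvd_of_pow_eq_one hpow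

theorem card_closure_insert_dvd {s : Set G} {g : G} {n : ℕ}
    (hg : g ∈ Subgroup.normalizer (Subgroup.closure s : Set G)) (hn : g ^ n ∈ Subgroup.closure s) :
    Nat.card (Subgroup.closure (insert g s)) ∣ Nat.card (Subgroup.closure s) * n := by
  have hcard := Subgroup.relIndex_mul_relIndex ⊥ (Subgroup.closure s)
    (Subgroup.zpowers g ⊔ Subgroup.closure s) bot_le le_sup_right
  rw [Subgroup.relIndex_bot_left, Subgroup.relIndex_bot_left,
    relIndex_sup_of_le_normalizer (Subgroup.zpowers_le.mpr hg)] at hcard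
  rw [Set.insert_eq, Subgroup.closure_union, ← Subgroup.zpowers_eq_closure, ← hcard]
  exact mul_dvd_mul_left _ (relIndex_zpowers_dvd hg hn)

end General

section Quaternion

variable {G : Type*} [Group G] {a b : G}

theorem sq_eq_sq_of_mul_mul_eq (hab : a * b * a = b) (hba : b * a * b = a) : a ^ 2 = b ^ 2 := by
  calc a ^ 2 = b * a * b * a := by rw [hba, sq]
    _ = b * (a * b * a) := by simp only [mul_assoc]
    _ = b ^ 2 := by rw [hab, sq]

theorem conj_eq_inv_of_mul_mul_eq (hab : a * b * a = b) : b * a * b⁻¹ = a⁻¹ := by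
  rw [mul_inv_eq_iff_eq_mul, eq_inv_mul_iff_mul_eq, ← mul_assoc, hab]

theorem pow_four_eq_one_of_mul_mul_eq (hab : a * b * a = b) (hba : b * a * b = a) :
    a ^ 4 = 1 := by
  have hsq := sq_eq_sq_of_mul_mul_eq hab hba
  have hinv : a ^ 2 = (a ^ 2)⁻¹ := by
    calc a ^ 2 = b * a ^ 2 * b⁻¹ := by rw [hsq]; group
      _ = (b * a * b⁻¹) ^ 2 := conj_pow.symm
      _ = (a ^ 2)⁻¹ := by rw [conj_eq_inv_of_mul_mul_eq hab, inv_pow]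
  calc a ^ 4 = a ^ 2 * a ^ 2 := pow_add a 2 2
    _ = 1 := mul_eq_one_iff_eq_inv.mpr hinv

theorem card_closure_pair_dvd_eight (hab : a * b * a = b) (hba : b * a * b = a) :
    Nat.card (Subgroup.closure {b, a}) ∣ 8 := by
  have hnorm : b ∈ Subgroup.normalizer (Subgroup.closure {a} : Set G) := by
    rw [Subgroup.mem_normalizer_iff_map_conj_eq, MonoidHom.map_closure, Set.image_singleton,
      MonoidHom.coe_coe, MulAut.conj_apply, conj_eq_inv_of_mul_mul_eq hab,
      ← Subgroup.zpowers_eq_closure, Subgroup.zpowers_inv, Subgroup.zpowers_eq_closure]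
  have hsq : b ^ 2 ∈ Subgroup.closure {a} :=
    sq_eq_sq_of_mul_mul_eq hab hba ▸ pow_mem (Subgroup.mem_closure_singleton_self a) 2
  have hcard : Nat.card (Subgroup.closure {a}) ∣ 4 := by
    rw [← Subgroup.zpowers_eq_closure, Nat.card_zpowers]
    exact orderOf_dvd_of_pow_eq_one (pow_four_eq_one_of_mul_mul_eq hab hba)
  exact (card_closure_insert_dvd hnorm hsq).trans (mul_dvd_mul_right hcard 2)

end Quaternion

/-- A pair of elements satisfying the relations `t³ = 1` and `atat = t²a`. These present the binary
tetrahedral group, with `a` and `t` in the roles of `binTetraI` and `binTetraTau`. -/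
structure IsBinTetraPair {G : Type*} [Group G] (a t : G) : Prop where
  pow_three : t ^ 3 = 1
  mul_mul_mul_eq : a * t * a * t = t ^ 2 * a

namespace IsBinTetraPair

variable {G : Type*} [Group G] {a t : G}

theorem conj_conj (h : IsBinTetraPair a t) :
    MulAut.conj t (MulAut.conj t a) = a * MulAut.conj t a := by
  calc MulAut.conj t (MulAut.conj t a) = t ^ 2 * a * t⁻¹ * t⁻¹ := by simp [sq, mul_assoc]
    _ = a * MulAut.conj t a := by simp [← h.mul_mul_mul_eq, mul_assoc]

theorem conj_conj_conj (h : IsBinTetraPair a t) (g : G) :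
    MulAut.conj t (MulAut.conj t (MulAut.conj t g)) = g := by
  calc MulAut.conj t (MulAut.conj t (MulAut.conj t g)) = MulAut.conj (t ^ 3) g := by
        simp [pow_succ]
    _ = g := by simp [h.pow_three]

theorem conj_mul_mul_conj (h : IsBinTetraPair a t) :
    MulAut.conj t a * a * MulAut.conj t a = a := by
  calc MulAut.conj t a * a * MulAut.conj t a = MulAut.conj t (a * MulAut.conj t a) := by
        rw [map_mul, h.conj_conj, mul_assoc]
    _ = a := by rw [← h.conj_conj, h.conj_conj_conj]

theorem mul_conj_mul (h : IsBinTetraPair a t) :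
    a * MulAut.conj t a * a = MulAut.conj t a := by
  calc a * MulAut.conj t a * a = MulAut.conj t (MulAut.conj t (a * MulAut.conj t a)) := by
        rw [map_mul, map_mul, h.conj_conj_conj, h.conj_conj]
    _ = MulAut.conj t a := by rw [← h.conj_conj, h.conj_conj_conj]

theorem mem_normalizer_closure (h : IsBinTetraPair a t) :
    t ∈ Subgroup.normalizer (Subgroup.closure {MulAut.conj t a, a} : Set G) := by
  rw [Subgroup.mem_normalizer_iff_map_conj_eq, MonoidHom.map_closure, Set.image_pair,
    MonoidHom.coe_coe, h.conj_conj]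
  set b := MulAut.conj t a
  have ha : a ∈ Subgroup.closure {b, a} := Subgroup.subset_closure (by simp)
  have hb : b ∈ Subgroup.closure {b, a} := Subgroup.subset_closure (by simp)
  have hab' : a * b ∈ Subgroup.closure {a * b, b} := Subgroup.subset_closure (by simp)
  have hb' : b ∈ Subgroup.closure {a * b, b} := Subgroup.subset_closure (by simp)
  apply le_antisymm <;> rw [Subgroup.closure_le]
  · exact Set.pair_subset (mul_mem ha hb) hb
  · exact Set.pair_subset hb' ((Subgroup.mul_mem_cancel_right _ hb').mp hab')

theorem card_closure_dvd (h : IsBinTetraPair a t) : Nat.card (Subgroup.closure {a, t}) ∣ 24 := by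
  have hclosure : Subgroup.closure {t, MulAut.conj t a, a} = Subgroup.closure {a, t} := by
    have ha : a ∈ Subgroup.closure {a, t} := Subgroup.subset_closure (by simp)
    have ht : t ∈ Subgroup.closure {a, t} := Subgroup.subset_closure (by simp)
    refine le_antisymm ?_ (Subgroup.closure_mono (by grind))
    rw [Subgroup.closure_le]
    exact Set.insert_subset ht
      (Set.pair_subset (mul_mem (mul_mem ht ha) (inv_mem ht)) ha)
  rw [← hclosure]
  exact (card_closure_insert_dvd h.mem_normalizer_closure (h.pow_three ▸ one_mem _)).trans
    (mul_dvd_mul_right (card_closure_pair_dvd_eight h.mul_conj_mul h.conj_mul_mul_conj) 3)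

theorem index_ne_two (h : IsBinTetraPair a t) (hgen : Subgroup.closure {a, t} = ⊤)
    (M : Subgroup G) : M.index ≠ 2 := by
  intro hM
  have hnormal := Subgroup.normal_of_index_eq_two hM
  have ht : t ∈ M := by
    have hsq : (t ^ 2) ^ 2 = t := by rw [← pow_mul, pow_succ, h.pow_three, one_mul]
    exact hsq ▸ Subgroup.sq_mem_of_index_two hM (t ^ 2)
  have hconj (g : G) : MulAut.conj t g ∈ M ↔ g ∈ M := (hnormal.mem_comm_iff ..).trans (by simp)
  have ha : a ∈ M := by
    have hmul : a * MulAut.conj t a ∈ M ↔ (a ∈ M ↔ MulAut.conj t a ∈ M) :=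
      Subgroup.mul_mem_iff_of_index_two hM
    simpa only [← h.conj_conj, hconj, iff_self, iff_true] using hmul
  have htop : M = ⊤ := by
    rw [eq_top_iff, ← hgen, Subgroup.closure_le]
    exact Set.pair_subset ha ht
  simp [htop] at hM

end IsBinTetraPair

theorem isBinTetraPair_binTetraI_binTetraTau : IsBinTetraPair binTetraI binTetraTau where
  pow_three := by
    apply Subtype.ext
    rw [pow_three, Matrix.SpecialLinearGroup.coe_mul, Matrix.SpecialLinearGroup.coe_mul]
    simp only [Matrix.SpecialLinearGroup.coe_one, binTetraTau, Matrix.mul_fin_two,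
      Matrix.one_fin_two]
    congr! 3 <;> grind [Complex.I_sq]
  mul_mul_mul_eq := by
    apply Subtype.ext
    simp only [sq, Matrix.SpecialLinearGroup.coe_mul]
    simp only [binTetraI, binTetraTau, Matrix.mul_fin_two]
    congr! 3 <;> grind [Complex.I_sq]

theorem binTetra_card_dvd : Nat.card binTetra ∣ 24 :=
  isBinTetraPair_binTetraI_binTetraTau.card_closure_dvd

theorem binTetra_index_ne_two (M : Subgroup binTetra) : M.index ≠ 2 := by
  let a : binTetra := ⟨binTetraI, Subgroup.subset_closure (by simp)⟩
  let t : binTetra := ⟨binTetraTau, Subgroup.subset_closure (by simp)⟩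
  have hpair : IsBinTetraPair a t :=
    ⟨Subtype.ext isBinTetraPair_binTetraI_binTetraTau.pow_three,
      Subtype.ext isBinTetraPair_binTetraI_binTetraTau.mul_mul_mul_eq⟩
  have hgen : Subgroup.closure {a, t} = ⊤ := by
    have hpre : {a, t} = ((↑) : binTetra → _) ⁻¹' {binTetraI, binTetraTau} := by
      ext x
      simp [a, t, Subtype.ext_iff]
    rw [hpre]
    exact Subgroup.closure_closure_coe_preimage
  exact hpair.index_ne_two hgen M

theorem binTetra_index_dvd_four {H : Subgroup binTetra} (hH : Nat.card H = 6) :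
    H.index ∣ 4 := by
  refine Nat.dvd_of_mul_dvd_mul_left (k := 6) (by norm_num) ?_
  rw [← hH, H.card_mul_index, hH]
  exact binTetra_card_dvd

/-- If `H` and `K` are two distinct subgroups of order 6 of the binary tetrahedral
group `T`, then `H` and `K` together generate `T`. -/
theorem stmt17 (H K : Subgroup ↥binTetra)
    (hH : Nat.card H = 6) (hK : Nat.card K = 6) (hne : H ≠ K) :
    H ⊔ K = ⊤ :=
  sup_eq_top_of_index_dvd_prime_sq Nat.prime_two binTetra_index_ne_two
    (binTetra_index_dvd_four hH) (binTetra_index_dvd_four hK) hne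
end
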